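/- Fix γ₀ ∈ ℝ and a positive integer k. Then, as h → 0 with ε = ε(h) → 0 and ε(h)/√h → ∞, one has E( S_h^{2k}·1_{|σW_h + S_h + hγ₀| ≤ ε} ) = ((C₊+C₋)/(2k−Y))·h·ε^{2k−Y} + (σ²(C₊+C₋)(2k−1−Y)/2)·h²·ε^{2k−Y−2} + O(h³·ε^{2k−4−Y}) + O(h²·ε^{2k−2Y}) + O(ε^{2k−1−Y}·h^{3/2}·e^{−ε²/(2σ²h)}), the remainder decomposing as a sum of functions with the indicated big-O rates. -/

import Mathlib

open MeasureTheory ProbabilityTheory Filter Asymptotics Set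
open scoped Topology NNReal ENNReal Real

noncomputable section

/-- The Lévy density `s(x) = (C₊·1_{x>0} + C₋·1_{x<0})·q(x)·|x|^{−1−Y}`. -/
def levyDensity (Y Cp Cm : ℝ) (q : ℝ → ℝ) (x : ℝ) : ℝ :=
  (if 0 < x then Cp else if x < 0 then Cm else 0) * q x * |x| ^ (-1 - Y)

/-- The Lévy measure `ν(dx) = s(x) dx`. -/
def levyMeasure (Y Cp Cm : ℝ) (q : ℝ → ℝ) : Measure ℝ :=
  volume.withDensity fun x => ENNReal.ofReal (levyDensity Y Cp Cm q x)

/-- The Lévy exponent `ψ_J(u) = ibu + ∫ (e^{iux} − 1 − iux·1_{|x|≤1}) ν(dx)`. -/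
def psiJ (b Y Cp Cm : ℝ) (q : ℝ → ℝ) (u : ℝ) : ℂ :=
  Complex.I * b * u +
    ∫ x : ℝ,
      (Complex.exp (Complex.I * u * x) - 1 - (if |x| ≤ 1 then Complex.I * u * x else 0))
      ∂(levyMeasure Y Cp Cm q)

/-- The scale parameter `ς = ((C₊+C₋)Γ(−Y)|cos(πY/2)|)^{1/Y}`. -/
def varsigma (Y Cp Cm : ℝ) : ℝ :=
  ((Cp + Cm) * Real.Gamma (-Y) * |Real.cos (π * Y / 2)|) ^ (1 / Y)

/-- The stable part of the Lévy exponent: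
`ς^Y |u|^Y (1 − iβ·sgn(u)·tan(πY/2))` with `β = (C₊−C₋)/(C₊+C₋)`. -/
def stablePart (Y Cp Cm : ℝ) (u : ℝ) : ℂ :=
  (varsigma Y Cp Cm ^ Y * |u| ^ Y : ℝ) *
    (1 - Complex.I * ((Cp - Cm) / (Cp + Cm)) * Real.sign u * Real.tan (π * Y / 2))

/-- Characteristic function of `X̃_h`, the time-`h` marginal of a Brownian motion with
variance `σ²` plus an independent strictly `Y`-stable process. -/
def tildeCF (σ Y Cp Cm : ℝ) (h u : ℝ) : ℂ :=
  Complex.exp (-(σ ^ 2 * u ^ 2 * h / 2) - h * stablePart Y Cp Cm u)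


/-- Characteristic function of the strictly `Y`-stable variable `S`. -/
def stableCF (Y Cp Cm : ℝ) (u : ℝ) : ℂ := Complex.exp (-stablePart Y Cp Cm u)

/-- Standard normal density `φ`. -/
def gaussDensity (x : ℝ) : ℝ := (Real.sqrt (2 * π))⁻¹ * Real.exp (-x ^ 2 / 2)

/-!
With `c = stablePart Y Cp Cm 1`, the density `p` of `S` is a Fourier integral of `exp (-c * r ^ Y)`.
Rotating the contour gives `p = levyDensity Y Cp Cm 1 + e` with `e` of size `|x| ^ (-1 - 2 * Y)` at
infinity. The error `e` has vanishing second moment: `∫ (1 - cos (u * x)) * e x` is a multiple of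
`u ^ Y` up to `O(u ^ (2 * Y))`, and an integrable `x ^ 2 * e x` makes it
`u ^ 2 / 2 * ∫ x ^ 2 * e x + o(u ^ 2)` where `Y < 2 < 2 * Y`.

Divide by `ε`. The density of `b * S`, `b = h ^ (1 / Y) / ε`, is then `b ^ Y` times the
(homogeneous) Lévy density plus the rescaled `e`, whose `2 * k`-th moment on the window
`|x + t| ≤ 1` is `O(b ^ (2 * Y))`: directly if `k ≥ 2`, and for `k = 1` because it is minus the
moment over the complement of the window. The moment of the Lévy density on the window is a smooth
function of `t` near `0`; take its cubic Taylor polynomial at the random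
`t = (σ * √h * W + h * γ₀) / ε`, independent of `S`. Because `W` has mean `0`, variance `1` and
third moment `0`, what remains beyond the constant and the quadratic term is `O(τ ^ 4 + |ρ|)`, where
`τ = σ * √h / ε` and `ρ = h * γ₀ / ε`. Undoing the scaling gives the expansion, without any
exponentially small term.
-/

/-! ### Contour rotation -/

theorem integral_ofReal_add_mul_I_eq_of_norm_le {F : ℂ → ℂ} (hF : Differentiable ℂ F) {a b : ℝ}
    {g : ℝ → ℝ} (hg : Integrable g) (hg_bot : Tendsto g atBot (𝓝 0))
    (hg_top : Tendsto g atTop (𝓝 0))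
    (hFg : ∀ ω ∈ uIcc a b, ∀ s : ℝ, ‖F (s + ω * Complex.I)‖ ≤ g s) :
    ∫ s : ℝ, F (s + a * Complex.I) = ∫ s : ℝ, F (s + b * Complex.I) := by
  have horizontal : ∀ ω ∈ uIcc a b, Tendsto (fun T : ℝ => ∫ s in (-T)..T, F (s + ω * Complex.I))
      atTop (𝓝 (∫ s : ℝ, F (s + ω * Complex.I))) := fun ω hω =>
    intervalIntegral_tendsto_integral
      (hg.mono' (hF.continuous.comp (by fun_prop)).aestronglyMeasurable
        (Eventually.of_forall (hFg ω hω))) tendsto_neg_atTop_atBot tendsto_id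
  have vertical : ∀ {x : ℝ → ℝ}, Tendsto (g ∘ x) atTop (𝓝 0) →
      Tendsto (fun T => Complex.I • ∫ ω in a..b, F (x T + ω * Complex.I)) atTop (𝓝 0) := by
    intro x hx
    refine squeeze_zero_norm (fun T => ?_) (by simpa using hx.mul_const |b - a|)
    rw [norm_smul, Complex.norm_I, one_mul]
    exact intervalIntegral.norm_integral_le_of_norm_le_const fun ω hω =>
      hFg ω (uIoc_subset_uIcc hω) _
  have boundary := (((horizontal a left_mem_uIcc).sub (horizontal b right_mem_uIcc)).add
    (vertical (x := fun T => T) hg_top)).sub (vertical (hg_bot.comp tendsto_neg_atTop_atBot))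
  rw [add_zero, sub_zero] at boundary
  refine sub_eq_zero.1 (tendsto_nhds_unique boundary (tendsto_const_nhds.congr fun T => ?_))
  simpa using (Complex.integral_boundary_rect_eq_zero_of_differentiableOn F
    ⟨-T, a⟩ ⟨T, b⟩ hF.differentiableOn).symm

theorem integral_exp_smul_comp_exp {E : Type*} [NormedAddCommGroup E] [NormedSpace ℝ E]
    (f : ℝ → E) : ∫ s : ℝ, Real.exp s • f (Real.exp s) = ∫ r in Ioi 0, f r := by
  rw [← Real.range_exp, ← image_univ]
  simpa using (integral_image_eq_integral_abs_deriv_smul MeasurableSet.univ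
    (fun s _ => (Real.hasDerivAt_exp s).hasDerivWithinAt) Real.exp_injective.injOn f).symm

theorem integrable_exp_smul_comp_exp {E : Type*} [NormedAddCommGroup E] [NormedSpace ℝ E]
    {f : ℝ → E} :
    Integrable (fun s : ℝ => Real.exp s • f (Real.exp s)) ↔ IntegrableOn f (Ioi 0) := by
  rw [← Real.range_exp, ← image_univ]
  simpa using (integrableOn_image_iff_integrableOn_abs_deriv_smul MeasurableSet.univ
    (fun s _ => (Real.hasDerivAt_exp s).hasDerivWithinAt) Real.exp_injective.injOn f).symm

section LaplaceIntegral

variable {a m δ Y θ : ℝ} {q c : ℂ}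

theorem integrable_exp_mul_sub_mul_exp (ha : 0 < a) (hm : 0 < m) (hδ : 0 < δ) :
    Integrable fun s : ℝ => Real.exp (a * s - δ * Real.exp (m * s)) := by
  refine (integrable_exp_smul_comp_exp.2 (integrableOn_rpow_mul_exp_neg_mul_rpow
    (s := a - 1) (by linarith) hm hδ)).congr (Eventually.of_forall fun s => ?_)
  simp only [smul_eq_mul, ← Real.exp_mul, ← Real.exp_add]
  ring_nf

theorem tendsto_exp_mul_sub_mul_exp_atBot (ha : 0 < a) (hδ : 0 ≤ δ) :
    Tendsto (fun s : ℝ => Real.exp (a * s - δ * Real.exp (m * s))) atBot (𝓝 0) := by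
  refine squeeze_zero (fun s => (Real.exp_pos _).le) (fun s => Real.exp_le_exp.2 ?_)
    (Real.tendsto_exp_atBot.comp (tendsto_id.const_mul_atBot ha))
  have := mul_nonneg hδ (Real.exp_pos (m * s)).le
  simpa using this

theorem tendsto_exp_mul_sub_mul_exp_atTop (hm : 0 < m) (hδ : 0 < δ) :
    Tendsto (fun s : ℝ => Real.exp (a * s - δ * Real.exp (m * s))) atTop (𝓝 0) := by
  have h := (tendsto_rpow_mul_exp_neg_mul_atTop_nhds_zero (a / m) δ hδ).comp
    (Real.tendsto_exp_atTop.comp (tendsto_id.const_mul_atTop hm))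
  refine h.congr fun s => ?_
  simp only [Function.comp_apply, id_eq, ← Real.exp_mul, ← Real.exp_add]
  congr 1
  field_simp
  ring

/-- The integrand of `∫ r ^ (a - 1) * exp (-(q * r + c * r ^ Y))` over `r > 0` after the
substitution `r = exp s`, as an entire function of `s`. -/
def laplaceLogIntegrand (a Y : ℝ) (q c ζ : ℂ) : ℂ :=
  Complex.exp (a * ζ - (q * Complex.exp ζ + c * Complex.exp (Y * ζ)))

theorem integral_laplaceLogIntegrand :
    ∫ s : ℝ, laplaceLogIntegrand a Y q c s =
      ∫ r in Ioi (0 : ℝ), (r : ℂ) ^ (a - 1 : ℂ) *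
        Complex.exp (-(q * r + c * ((r ^ Y : ℝ) : ℂ))) := by
  rw [← integral_exp_smul_comp_exp]
  refine integral_congr_ae (Eventually.of_forall fun s => ?_)
  have hpow : (Real.exp s : ℂ) ^ (a - 1 : ℂ) = Complex.exp (s * (a - 1)) := by
    rw [Complex.cpow_def_of_ne_zero (by simp), ← Complex.ofReal_log (Real.exp_pos s).le,
      Real.log_exp]
  simp only [laplaceLogIntegrand, hpow, Complex.real_smul, ← Real.exp_mul]
  rw [← mul_assoc, Complex.ofReal_exp, Complex.ofReal_exp, ← Complex.exp_add, ← Complex.exp_add]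
  push_cast
  ring_nf

theorem laplaceLogIntegrand_add_mul_I (s : ℝ) :
    laplaceLogIntegrand a Y q c (s + θ * Complex.I) = Complex.exp (a * θ * Complex.I) *
      laplaceLogIntegrand a Y (q * Complex.exp (θ * Complex.I))
        (c * Complex.exp (Y * θ * Complex.I)) s := by
  rw [laplaceLogIntegrand, laplaceLogIntegrand, ← Complex.exp_add, mul_assoc q, mul_assoc c,
    ← Complex.exp_add, ← Complex.exp_add]
  ring_nf

theorem norm_laplaceLogIntegrand (s : ℝ) :
    ‖laplaceLogIntegrand a Y q c s‖ =
      Real.exp (a * s - (q.re * Real.exp s + c.re * Real.exp (Y * s))) := by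
  rw [laplaceLogIntegrand, Complex.norm_exp, ← Complex.ofReal_exp, ← Complex.ofReal_mul,
    ← Complex.ofReal_mul, ← Complex.ofReal_exp, Complex.sub_re, Complex.add_re,
    Complex.re_mul_ofReal, Complex.re_mul_ofReal, Complex.ofReal_re]

theorem integral_cpow_mul_exp_neg_rotate (ha : 0 < a) (hm : 0 < m) (hδ : 0 < δ)
    (h : ∀ ω ∈ uIcc 0 θ, ∀ r : ℝ, 0 < r → δ * r ^ m ≤ (q * Complex.exp (ω * Complex.I)).re * r +
      (c * Complex.exp (Y * ω * Complex.I)).re * r ^ Y) :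
    ∫ r in Ioi (0 : ℝ), (r : ℂ) ^ (a - 1 : ℂ) *
        Complex.exp (-(q * r + c * ((r ^ Y : ℝ) : ℂ))) =
      Complex.exp (a * θ * Complex.I) * ∫ r in Ioi (0 : ℝ), (r : ℂ) ^ (a - 1 : ℂ) *
        Complex.exp (-(q * Complex.exp (θ * Complex.I) * r +
          c * Complex.exp (Y * θ * Complex.I) * ((r ^ Y : ℝ) : ℂ))) := by
  rw [← integral_laplaceLogIntegrand, ← integral_laplaceLogIntegrand, ← integral_const_mul]
  simp_rw [← laplaceLogIntegrand_add_mul_I]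
  have hdiff : Differentiable ℂ (laplaceLogIntegrand a Y q c) := by
    unfold laplaceLogIntegrand; fun_prop
  simpa using integral_ofReal_add_mul_I_eq_of_norm_le hdiff (a := 0) (b := θ)
    (integrable_exp_mul_sub_mul_exp ha hm hδ) (tendsto_exp_mul_sub_mul_exp_atBot ha hδ.le)
    (tendsto_exp_mul_sub_mul_exp_atTop hm hδ) fun ω hω s => by
      have key := h ω hω (Real.exp s) (Real.exp_pos s)
      simp only [← Real.exp_mul, mul_comm s] at key
      have hrot : ‖Complex.exp (a * ω * Complex.I)‖ = 1 := by
        rw [← Complex.ofReal_mul, Complex.norm_exp_ofReal_mul_I]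
      rw [laplaceLogIntegrand_add_mul_I, norm_mul, hrot, one_mul, norm_laplaceLogIntegrand]
      exact Real.exp_le_exp.2 (by linarith)

theorem integral_cpow_mul_exp_neg_mul_Ioi_of_re_pos (ha : 0 < a) (hq : 0 < q.re) :
    ∫ r in Ioi (0 : ℝ), (r : ℂ) ^ (a - 1 : ℂ) * Complex.exp (-(q * r)) =
      q ^ (-a : ℂ) * Real.Gamma a := by
  have hq0 : q ≠ 0 := fun h => by simp [h] at hq
  have hnorm : 0 < ‖q‖ := norm_pos_iff.2 hq0
  have hpolar : q * Complex.exp (-q.arg * Complex.I) = ‖q‖ := by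
    nth_rewrite 1 [← Complex.norm_mul_exp_arg_mul_I q]
    rw [mul_assoc, ← Complex.exp_add]
    simp
  have hre : ∀ ω ∈ uIcc 0 (-q.arg), q.re ≤ (q * Complex.exp (ω * Complex.I)).re := by
    intro ω hω
    have hω' : |q.arg + ω| ≤ |q.arg| := by
      rw [mem_uIcc] at hω; grind
    nth_rewrite 1 2 [← Complex.norm_mul_exp_arg_mul_I q]
    rw [mul_assoc, ← Complex.exp_add, ← add_mul, ← Complex.ofReal_add, Complex.re_ofReal_mul,
      Complex.re_ofReal_mul, Complex.exp_ofReal_mul_I_re, Complex.exp_ofReal_mul_I_re]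
    gcongr
    rw [← Real.cos_abs, ← Real.cos_abs (q.arg + ω)]
    exact Real.cos_le_cos_of_nonneg_of_le_pi (abs_nonneg _) (Complex.abs_arg_le_pi q) hω'
  have hrot := integral_cpow_mul_exp_neg_rotate (Y := 0) (c := 0) ha one_pos hq
    (θ := -q.arg) (q := q) fun ω hω r hr => by
      simpa using mul_le_mul_of_nonneg_right (hre ω hω) hr.le
  simp only [zero_mul, add_zero, Complex.ofReal_neg, hpolar] at hrot
  rw [hrot, Complex.integral_cpow_mul_exp_neg_mul_Ioi (by simpa using ha) hnorm,
    Complex.Gamma_ofReal, ← mul_assoc]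
  congr 1
  rw [one_div, Complex.inv_cpow _ _
    (by simp [Complex.arg_ofReal_of_nonneg hnorm.le, Real.pi_ne_zero.symm]),
    ← Complex.cpow_neg, Complex.cpow_def_of_ne_zero hq0,
    Complex.cpow_def_of_ne_zero (by exact_mod_cast hnorm.ne'), ← Complex.exp_add,
    ← Complex.ofReal_log hnorm.le, Complex.log]
  ring_nf

end LaplaceIntegral

theorem ofReal_mul_exp_mul_I_cpow {x ω : ℝ} (hx : 0 < x) (hω : ω ∈ Ioc (-π) π) (s : ℂ) :
    (x * Complex.exp (ω * Complex.I)) ^ s = (x : ℂ) ^ s * Complex.exp (s * ω * Complex.I) := by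
  have hx0 : (x : ℂ) ≠ 0 := Complex.ofReal_ne_zero.2 hx.ne'
  rw [Complex.cpow_def_of_ne_zero (mul_ne_zero hx0 (Complex.exp_ne_zero _)),
    Complex.log_ofReal_mul hx (Complex.exp_ne_zero _), Complex.log_exp (by simpa using hω.1)
    (by simpa using hω.2), Complex.cpow_def_of_ne_zero hx0, ← Complex.ofReal_log hx.le,
    ← Complex.exp_add]
  ring_nf

theorem ofReal_mul_I_cpow {x : ℝ} (hx : 0 < x) (s : ℂ) :
    (x * Complex.I) ^ s = (x : ℂ) ^ s * Complex.exp (s * (π / 2 : ℝ) * Complex.I) := by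
  rw [← ofReal_mul_exp_mul_I_cpow hx ⟨by linarith [Real.pi_pos], by linarith [Real.pi_pos]⟩,
    Complex.ofReal_div, Complex.ofReal_ofNat, Complex.exp_pi_div_two_mul_I]

theorem inv_sub_mul_cpow_rotate {x θ : ℝ} (hx : 0 < x) (hθ : π / 2 - θ ∈ Ioc (-π) π)
    (c g s : ℂ) :
    (x * Complex.I)⁻¹ - c * g * (x * Complex.I) ^ (-(1 + s)) =
      Complex.exp ((-θ : ℝ) * Complex.I) *
        ((x * Complex.I * Complex.exp ((-θ : ℝ) * Complex.I))⁻¹ -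
          c * Complex.exp (s * (-θ : ℝ) * Complex.I) * g *
            (x * Complex.I * Complex.exp ((-θ : ℝ) * Complex.I)) ^ (-(1 + s))) := by
  have hpolar : x * Complex.I * Complex.exp ((-θ : ℝ) * Complex.I) =
      x * Complex.exp ((π / 2 - θ : ℝ) * Complex.I) := by
    rw [sub_eq_add_neg, Complex.ofReal_add, add_mul, Complex.exp_add, Complex.ofReal_div,
      Complex.ofReal_ofNat, Complex.exp_pi_div_two_mul_I, mul_assoc]
  have hphase : Complex.exp (-(1 + s) * (π / 2 : ℝ) * Complex.I) =
      Complex.exp ((-θ : ℝ) * Complex.I) * Complex.exp (s * (-θ : ℝ) * Complex.I) *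
        Complex.exp (-(1 + s) * (π / 2 - θ : ℝ) * Complex.I) := by
    rw [← Complex.exp_add, ← Complex.exp_add]
    push_cast
    ring_nf
  have hinv : Complex.exp ((-θ : ℝ) * Complex.I) *
      (x * Complex.I * Complex.exp ((-θ : ℝ) * Complex.I))⁻¹ = (x * Complex.I)⁻¹ := by
    rw [mul_inv_rev, ← mul_assoc, mul_inv_cancel₀ (Complex.exp_ne_zero _), one_mul]
  rw [mul_sub, hinv, hpolar, ofReal_mul_exp_mul_I_cpow hx hθ, ofReal_mul_I_cpow hx, hphase]
  ring

/-- The Laplace transform at `q` of the stretched exponential `r ↦ exp (-c * r ^ Y)` on the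
half-line, for complex `q` and `c`. On the imaginary axis it is a half-line Fourier integral. -/
def stretchedLaplace (c : ℂ) (Y : ℝ) (q : ℂ) : ℂ :=
  ∫ r in Ioi (0 : ℝ), Complex.exp (-(q * r + c * ((r ^ Y : ℝ) : ℂ)))

theorem stretchedLaplace_rotate {c q : ℂ} {Y δ θ : ℝ} (hY : 0 < Y) (hδ : 0 < δ)
    (hq : ∀ ω ∈ uIcc 0 θ, 0 ≤ (q * Complex.exp (ω * Complex.I)).re)
    (hc : ∀ ω ∈ uIcc 0 θ, δ ≤ (c * Complex.exp (Y * ω * Complex.I)).re) :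
    stretchedLaplace c Y q = Complex.exp (θ * Complex.I) *
      stretchedLaplace (c * Complex.exp (Y * θ * Complex.I)) Y
        (q * Complex.exp (θ * Complex.I)) := by
  have h := integral_cpow_mul_exp_neg_rotate one_pos hY hδ (θ := θ) (q := q) (c := c)
    fun ω hω r hr => by
      have := mul_le_mul_of_nonneg_right (hc ω hω) (Real.rpow_nonneg hr.le Y)
      have := mul_nonneg (hq ω hω) hr.le
      linarith
  simpa only [Complex.ofReal_one, sub_self, Complex.cpow_zero, one_mul, stretchedLaplace] using h

theorem norm_exp_neg_sub_one_add_le {w : ℂ} (hw : 0 ≤ w.re) :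
    ‖Complex.exp (-w) - 1 + w‖ ≤ 3 * ‖w‖ ^ 2 := by
  rcases le_total ‖w‖ 1 with h | h
  · have hle := Complex.norm_exp_sub_one_sub_id_le (x := -w) (by simpa using h)
    rw [sub_neg_eq_add, norm_neg] at hle
    nlinarith [sq_nonneg ‖w‖]
  · have hexp : ‖Complex.exp (-w)‖ ≤ 1 := by
      rw [Complex.norm_exp]; simpa using hw
    have htri := norm_add_le (Complex.exp (-w) - 1) w
    have hsub := norm_sub_le (Complex.exp (-w)) 1
    rw [norm_one] at hsub
    nlinarith

section Expansion

variable {c q : ℂ} {Y s : ℝ}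

theorem integrableOn_cpow_mul_exp_neg_mul (hs : -1 < s) (hq : 0 < q.re) :
    IntegrableOn (fun r : ℝ => ((r ^ s : ℝ) : ℂ) * Complex.exp (-(q * r))) (Ioi 0) := by
  have h := integrableOn_rpow_mul_exp_neg_mul_rpow hs one_pos hq
  refine h.mono' (by fun_prop) ?_
  filter_upwards [ae_restrict_mem measurableSet_Ioi] with r hr
  rw [norm_mul, Complex.norm_exp, Complex.norm_real, Complex.neg_re, Complex.re_mul_ofReal,
    Real.norm_of_nonneg (Real.rpow_nonneg (le_of_lt hr) _), Real.rpow_one, neg_mul]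

theorem integral_ofReal_rpow_mul_exp_neg_mul (hs : -1 < s) (hq : 0 < q.re) :
    ∫ r in Ioi (0 : ℝ), ((r ^ s : ℝ) : ℂ) * Complex.exp (-(q * r)) =
      q ^ (-(1 + s) : ℂ) * Real.Gamma (1 + s) := by
  have h := integral_cpow_mul_exp_neg_mul_Ioi_of_re_pos (a := 1 + s) (by linarith) hq
  rw [← Complex.ofReal_one, ← Complex.ofReal_add, ← h]
  refine setIntegral_congr_fun measurableSet_Ioi fun r hr => ?_
  rw [Complex.ofReal_cpow (le_of_lt hr)]
  push_cast
  ring_nf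

theorem integrableOn_exp_neg_add_mul_rpow (hq : 0 < q.re) (hc : 0 ≤ c.re) :
    IntegrableOn (fun r : ℝ => Complex.exp (-(q * r + c * ((r ^ Y : ℝ) : ℂ)))) (Ioi 0) := by
  refine (integrableOn_cpow_mul_exp_neg_mul (s := 0) (by norm_num) hq).norm.mono' (by fun_prop) ?_
  filter_upwards [ae_restrict_mem measurableSet_Ioi] with r hr
  have := mul_nonneg hc (Real.rpow_nonneg (le_of_lt hr) Y)
  rw [Real.rpow_zero, Complex.ofReal_one, one_mul, Complex.norm_exp, Complex.norm_exp]
  refine Real.exp_le_exp.2 ?_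
  simpa [Complex.re_mul_ofReal] using this

theorem norm_stretchedLaplace_sub_le (hY : 0 < Y) (hq : 0 < q.re) (hc : 0 ≤ c.re) :
    ‖stretchedLaplace c Y q - (q⁻¹ - c * Real.Gamma (1 + Y) * q ^ (-(1 + Y) : ℂ))‖ ≤
      3 * ‖c‖ ^ 2 * Real.Gamma (1 + 2 * Y) * q.re ^ (-(1 + 2 * Y)) := by
  have hint := integrableOn_cpow_mul_exp_neg_mul (s := 0) (by norm_num) hq
  have hintY := (integrableOn_cpow_mul_exp_neg_mul (s := Y) (by linarith) hq).const_mul c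
  have hint2Y := integrableOn_rpow_mul_exp_neg_mul_rpow (s := 2 * Y) (by linarith) one_pos hq
  have hmain : q⁻¹ - c * Real.Gamma (1 + Y) * q ^ (-(1 + Y) : ℂ) = ∫ r in Ioi (0 : ℝ),
      (((r ^ (0 : ℝ) : ℝ) : ℂ) * Complex.exp (-(q * r)) -
        c * (((r ^ Y : ℝ) : ℂ) * Complex.exp (-(q * r)))) := by
    rw [integral_sub hint hintY, integral_const_mul,
      integral_ofReal_rpow_mul_exp_neg_mul (by norm_num) hq,
      integral_ofReal_rpow_mul_exp_neg_mul (by linarith) hq]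
    simp only [Complex.ofReal_zero, add_zero, Complex.cpow_neg_one, Real.Gamma_one,
      Complex.ofReal_one, mul_one]
    ring
  have hbound : ∫ r in Ioi (0 : ℝ), 3 * ‖c‖ ^ 2 * (r ^ (2 * Y) * Real.exp (-q.re * r ^ (1 : ℝ))) =
      3 * ‖c‖ ^ 2 * Real.Gamma (1 + 2 * Y) * q.re ^ (-(1 + 2 * Y)) := by
    rw [integral_const_mul, integral_rpow_mul_exp_neg_mul_rpow one_pos (by linarith) hq]
    ring_nf
  rw [hmain, stretchedLaplace, ← integral_sub (integrableOn_exp_neg_add_mul_rpow hq hc)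
    (hint.fun_sub hintY), ← hbound]
  refine norm_integral_le_of_norm_le (hint2Y.const_mul _) ?_
  filter_upwards [ae_restrict_mem measurableSet_Ioi] with r hr
  have hr : 0 < r := hr
  calc ‖_‖ = ‖Complex.exp (-(q * r)) * (Complex.exp (-(c * ((r ^ Y : ℝ) : ℂ))) - 1 +
        c * ((r ^ Y : ℝ) : ℂ))‖ := by
        congr 1
        rw [neg_add, Complex.exp_add, Real.rpow_zero]
        push_cast
        ring
    _ ≤ Real.exp (-(q.re * r)) * (3 * ‖c * ((r ^ Y : ℝ) : ℂ)‖ ^ 2) := by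
        rw [norm_mul, Complex.norm_exp, Complex.neg_re, Complex.re_mul_ofReal]
        gcongr
        refine norm_exp_neg_sub_one_add_le ?_
        rw [Complex.re_mul_ofReal]
        positivity
    _ = 3 * ‖c‖ ^ 2 * (r ^ (2 * Y) * Real.exp (-q.re * r ^ (1 : ℝ))) := by
        rw [norm_mul, Complex.norm_real, Real.norm_of_nonneg (by positivity), mul_comm 2 Y,
          Real.rpow_mul hr.le, Real.rpow_two, Real.rpow_one, neg_mul]
        ring

theorem exists_forall_rotate_re_ge (hc : 0 < c.re) (Y : ℝ) :
    ∃ θ ∈ Ioo 0 (π / 2), ∀ ω ∈ Icc (-θ) 0,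
      c.re / 2 ≤ (c * Complex.exp (Y * ω * Complex.I)).re := by
  have hcont : Continuous fun ω : ℝ => (c * Complex.exp (Y * ω * Complex.I)).re :=
    Complex.continuous_re.comp (by fun_prop)
  have h0 : c.re / 2 < (c * Complex.exp (Y * (0 : ℝ) * Complex.I)).re := by
    simpa using half_lt_self hc
  obtain ⟨d, hd, hball⟩ := Metric.eventually_nhds_iff.1 (hcont.continuousAt.eventually_const_lt h0)
  refine ⟨min (d / 2) (π / 4), ⟨by positivity, ?_⟩, fun ω hω => (hball ?_).le⟩
  · exact (min_le_right _ _).trans_lt (by linarith [Real.pi_pos])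
  · rw [Real.dist_eq, sub_zero, abs_of_nonpos hω.2]
    linarith [hω.1, min_le_left (d / 2) (π / 4)]

theorem exists_norm_stretchedLaplace_I_mul_sub_le (hc : 0 < c.re) (hY : 0 < Y) :
    ∃ C : ℝ, ∀ x : ℝ, 0 < x →
      ‖stretchedLaplace c Y (x * Complex.I) - ((x * Complex.I)⁻¹ -
        c * Real.Gamma (1 + Y) * (x * Complex.I) ^ (-(1 + Y) : ℂ))‖ ≤ C * x ^ (-(1 + 2 * Y)) := by
  obtain ⟨θ, ⟨hθ0, hθ⟩, hrot⟩ := exists_forall_rotate_re_ge hc Y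
  have hsin : 0 < Real.sin θ := Real.sin_pos_of_pos_of_lt_pi hθ0 (by linarith [Real.pi_pos])
  have hre : ∀ x ω : ℝ, (x * Complex.I * Complex.exp (ω * Complex.I)).re = x * Real.sin (-ω) := by
    intro x ω
    rw [mul_assoc, Complex.re_ofReal_mul, Complex.I_mul_re, Complex.exp_ofReal_mul_I_im,
      Real.sin_neg]
  refine ⟨3 * ‖c‖ ^ 2 * Real.Gamma (1 + 2 * Y) * Real.sin θ ^ (-(1 + 2 * Y)), fun x hx => ?_⟩
  set c' := c * Complex.exp (Y * (-θ : ℝ) * Complex.I)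
  set q' := x * Complex.I * Complex.exp ((-θ : ℝ) * Complex.I)
  have hq're : q'.re = x * Real.sin θ := by rw [hre, neg_neg]
  have hrotate : stretchedLaplace c Y (x * Complex.I) =
      Complex.exp ((-θ : ℝ) * Complex.I) * stretchedLaplace c' Y q' := by
    refine stretchedLaplace_rotate hY (half_pos hc) (fun ω hω => ?_) fun ω hω => ?_ <;>
      rw [uIcc_of_ge (by linarith)] at hω
    · rw [hre]
      exact mul_nonneg hx.le (Real.sin_nonneg_of_nonneg_of_le_pi (by linarith [hω.2])
        (by linarith [hω.1, Real.pi_pos]))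
    · exact hrot ω hω
  have hexpand := inv_sub_mul_cpow_rotate hx (θ := θ)
    ⟨by linarith [Real.pi_pos], by linarith [Real.pi_pos]⟩ c (Real.Gamma (1 + Y)) Y
  rw [hrotate, hexpand, ← mul_sub, norm_mul, Complex.norm_exp_ofReal_mul_I, one_mul]
  refine (norm_stretchedLaplace_sub_le hY (hq're ▸ mul_pos hx hsin)
    ((half_pos hc).le.trans (hrot (-θ) (by simpa using hθ0.le)))).trans_eq ?_
  rw [hq're, Real.mul_rpow hx.le hsin.le, norm_mul, ← Complex.ofReal_mul,
    Complex.norm_exp_ofReal_mul_I]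
  ring

end Expansion

/-! ### Recovering a density from its Fourier transform -/

theorem ae_nonneg_and_eq_of_add_withDensity_neg {α : Type*} [MeasurableSpace α] {μ ν : Measure α}
    {p : α → ℝ} (hp : Measurable p)
    (h : μ + ν.withDensity (fun x => ENNReal.ofReal (-p x)) =
      ν.withDensity fun x => ENNReal.ofReal (p x)) :
    0 ≤ᵐ[ν] p ∧ μ = ν.withDensity fun x => ENNReal.ofReal (p x) := by
  have hneg : MeasurableSet {x | p x < 0} := hp measurableSet_Iio
  have hp_neg : Measurable fun x => ENNReal.ofReal (-p x) := hp.fun_neg.ennreal_ofReal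
  have hpos_zero : ν.withDensity (fun x => ENNReal.ofReal (p x)) {x | p x < 0} = 0 := by
    rw [withDensity_apply _ hneg]
    exact setLIntegral_eq_zero hneg fun x hx => ENNReal.ofReal_of_nonpos (le_of_lt hx)
  have hneg_zero : ν.withDensity (fun x => ENNReal.ofReal (-p x)) {x | p x < 0} = 0 := by
    rw [← h, Measure.add_apply] at hpos_zero
    exact (add_eq_zero.1 hpos_zero).2
  have hae : 0 ≤ᵐ[ν] p := by
    rw [withDensity_apply_eq_zero hp_neg] at hneg_zero
    refine measure_mono_null (fun x hx => ?_) hneg_zero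
    have hx : p x < 0 := not_le.1 hx
    exact ⟨by simpa using hx, hx⟩
  have hzero : ν.withDensity (fun x => ENNReal.ofReal (-p x)) = 0 := by
    refine (withDensity_eq_zero_iff hp_neg.aemeasurable).2 ?_
    filter_upwards [hae] with x hx
    exact ENNReal.ofReal_of_nonpos (neg_nonpos.2 hx)
  exact ⟨hae, by rw [← h, hzero, add_zero]⟩

section CharFun

open scoped InnerProductSpace

variable {E : Type*} [NormedAddCommGroup E] [InnerProductSpace ℝ E] [MeasurableSpace E]
  {μ ν : Measure E} {p : E → ℝ}

theorem integrable_exp_inner_mul_I_mul [OpensMeasurableSpace E] {f : E → ℂ}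
    (hf : Integrable f ν) (u : E) :
    Integrable (fun x => Complex.exp (⟪x, u⟫_ℝ * Complex.I) * f x) ν := by
  refine hf.bdd_mul (c := 1) (Continuous.aestronglyMeasurable (by fun_prop))
    (Eventually.of_forall fun x => ?_)
  rw [Complex.norm_exp_ofReal_mul_I]

theorem charFun_add_measure [OpensMeasurableSpace E] [IsFiniteMeasure μ] [IsFiniteMeasure ν]
    (u : E) :
    charFun (μ + ν) u = charFun μ u + charFun ν u := by
  simp only [charFun_apply]
  exact integral_add_measure
    (by simpa using integrable_exp_inner_mul_I_mul (integrable_const (1 : ℂ)) u)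
    (by simpa using integrable_exp_inner_mul_I_mul (integrable_const (1 : ℂ)) u)

theorem charFun_withDensity_ofReal (hp : Measurable p) (u : E) :
    charFun (ν.withDensity fun x => ENNReal.ofReal (p x)) u =
      ∫ x, Complex.exp (⟪x, u⟫_ℝ * Complex.I) * ((max (p x) 0 : ℝ) : ℂ) ∂ν := by
  rw [charFun_apply, integral_withDensity_eq_integral_toReal_smul hp.ennreal_ofReal
    (Eventually.of_forall fun x => ENNReal.ofReal_lt_top)]
  simp only [ENNReal.toReal_ofReal', Complex.real_smul, mul_comm]

theorem eq_withDensity_ofReal_of_charFun [BorelSpace E] [SecondCountableTopology E]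
    [CompleteSpace E] [IsFiniteMeasure μ] (hp : Measurable p) (hint : Integrable p ν)
    (h : ∀ u, charFun μ u = ∫ x, Complex.exp (⟪x, u⟫_ℝ * Complex.I) * p x ∂ν) :
    0 ≤ᵐ[ν] p ∧ μ = ν.withDensity fun x => ENNReal.ofReal (p x) := by
  have := isFiniteMeasure_withDensity_ofReal hint.2
  have := isFiniteMeasure_withDensity_ofReal hint.fun_neg.2
  refine ae_nonneg_and_eq_of_add_withDensity_neg hp (Measure.ext_of_charFun (funext fun u => ?_))
  have hpos : Integrable (fun x => Complex.exp (⟪x, u⟫_ℝ * Complex.I) * p x) ν :=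
    integrable_exp_inner_mul_I_mul hint.ofReal u
  have hneg : Integrable
      (fun x => Complex.exp (⟪x, u⟫_ℝ * Complex.I) * ((max (-p x) 0 : ℝ) : ℂ)) ν :=
    integrable_exp_inner_mul_I_mul hint.fun_neg.pos_part.ofReal u
  rw [charFun_add_measure, h, charFun_withDensity_ofReal hp.fun_neg, charFun_withDensity_ofReal hp,
    ← integral_add hpos hneg]
  refine integral_congr_ae (Eventually.of_forall fun x => ?_)
  simp only [← mul_add, ← Complex.ofReal_add]
  congr 2
  rcases le_total (p x) 0 with hx | hx
  · rw [max_eq_right hx, max_eq_left (neg_nonneg.2 hx), add_neg_cancel]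
  · rw [max_eq_left hx, max_eq_right (neg_nonpos.2 hx), add_zero]

end CharFun

/-! ### Half-line integrals and power-law densities -/

section HalfLine

variable {E : Type*} [NormedAddCommGroup E] {f : ℝ → E}

theorem integrable_of_integrableOn_Ioi (hpos : IntegrableOn f (Ioi 0))
    (hneg : IntegrableOn (fun x => f (-x)) (Ioi 0)) : Integrable f := by
  rw [← integrableOn_univ, ← Iic_union_Ioi (a := (0 : ℝ)), integrableOn_union,
    integrableOn_Iic_iff_integrableOn_Iio]
  refine ⟨?_, hpos⟩
  rw [← (Measure.measurePreserving_neg (volume : Measure ℝ)).integrableOn_comp_preimage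
    (Homeomorph.neg ℝ).measurableEmbedding]
  simpa [Function.comp_def] using hneg

theorem integrable_comp_abs_of_integrableOn_Ioi (hf : IntegrableOn f (Ioi 0)) :
    Integrable fun x => f |x| := by
  have hpos : IntegrableOn (fun x => f |x|) (Ioi 0) :=
    hf.congr_fun (fun x hx => by rw [abs_of_pos hx]) measurableSet_Ioi
  exact integrable_of_integrableOn_Ioi hpos (by simpa only [abs_neg] using hpos)

theorem integral_eq_integral_Ioi_add_integral_Ioi_neg [NormedSpace ℝ E] (hf : Integrable f) :
    ∫ x, f x = (∫ x in Ioi (0 : ℝ), f x) + ∫ x in Ioi (0 : ℝ), f (-x) := by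
  rw [integral_comp_neg_Ioi, neg_zero, add_comm,
    intervalIntegral.integral_Iic_add_Ioi hf.integrableOn hf.integrableOn]

theorem integrable_of_norm_le_abs_rpow {a b A B : ℝ} (hf : AEStronglyMeasurable f) (ha : -1 < a)
    (hb : b < -1) (hfa : ∀ x, x ≠ 0 → ‖f x‖ ≤ A * |x| ^ a)
    (hfb : ∀ x, x ≠ 0 → ‖f x‖ ≤ B * |x| ^ b) : Integrable f := by
  have hint : IntegrableOn (fun r : ℝ => if r ≤ 1 then A * r ^ a else B * r ^ b) (Ioi 0) := by
    rw [← Ioc_union_Ioi_eq_Ioi (zero_le_one (α := ℝ)), integrableOn_union]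
    refine ⟨IntegrableOn.congr_fun (f := fun r => A * r ^ a) ?_ (fun r hr => (if_pos hr.2).symm)
        measurableSet_Ioc,
      IntegrableOn.congr_fun (f := fun r => B * r ^ b)
        ((integrableOn_Ioi_rpow_of_lt hb one_pos).const_mul B)
        (fun r hr => (if_neg (not_le.2 hr)).symm) measurableSet_Ioi⟩
    rw [← intervalIntegrable_iff_integrableOn_Ioc_of_le zero_le_one]
    exact (intervalIntegral.intervalIntegrable_rpow' ha).const_mul A
  refine (integrable_comp_abs_of_integrableOn_Ioi hint).mono' hf ?_
  filter_upwards [Measure.ae_ne volume 0] with x hx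
  split_ifs
  exacts [hfa x hx, hfb x hx]

end HalfLine

theorem abs_pow_mul_le_mul_abs_rpow (n : ℕ) {q K x y : ℝ} (hx : x ≠ 0)
    (hy : |y| ≤ K * |x| ^ (-1 - q)) : |x ^ n * y| ≤ K * |x| ^ (n - 1 - q) := by
  rw [abs_mul, abs_pow, show n - 1 - q = n + (-1 - q) by ring, Real.rpow_add (abs_pos.2 hx),
    Real.rpow_natCast, mul_left_comm]
  gcongr

section LevyDensity

variable {Y Cp Cm x : ℝ}

theorem levyDensity_one_of_pos (hx : 0 < x) : levyDensity Y Cp Cm 1 x = Cp * x ^ (-1 - Y) := by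
  rw [levyDensity, if_pos hx, Pi.one_apply, mul_one, abs_of_pos hx]

theorem levyDensity_neg_one (x : ℝ) :
    levyDensity Y Cp Cm 1 (-x) = levyDensity Y Cm Cp 1 x := by
  rcases lt_trichotomy x 0 with h | rfl | h
  · simp [levyDensity, h, h.le]
  · simp [levyDensity]
  · simp [levyDensity, h, h.le]

theorem abs_levyDensity_one_le (x : ℝ) :
    |levyDensity Y Cp Cm 1 x| ≤ max |Cp| |Cm| * |x| ^ (-1 - Y) := by
  rw [levyDensity, Pi.one_apply, mul_one, abs_mul, abs_of_nonneg (a := |x| ^ _) (by positivity)]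
  gcongr
  split_ifs <;> simp

theorem measurable_levyDensity_one : Measurable (levyDensity Y Cp Cm 1) := by
  refine Measurable.mul (Measurable.mul ?_ measurable_one) (by fun_prop)
  exact Measurable.ite measurableSet_Ioi measurable_const
    (Measurable.ite measurableSet_Iio measurable_const measurable_const)

theorem levyDensity_one_mul {a : ℝ} (ha : 0 < a) (x : ℝ) :
    levyDensity Y Cp Cm 1 (a * x) = a ^ (-1 - Y) * levyDensity Y Cp Cm 1 x := by
  simp only [levyDensity, mul_pos_iff_of_pos_left ha, mul_neg_iff, ha, ha.not_gt, true_and,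
    false_and, or_false, Pi.one_apply, mul_one, abs_mul, abs_of_pos,
    Real.mul_rpow ha.le (abs_nonneg x)]
  ring

end LevyDensity

/-! ### The stable density -/

section StableDensity

variable {c : ℂ} {Y : ℝ}

/-- The characteristic function of a strictly `Y`-stable law, `exp (-c * |u| ^ Y)` on the positive
half-line and its complex conjugate on the negative one. -/
def stableCharFun (c : ℂ) (Y u : ℝ) : ℂ :=
  if 0 ≤ u then Complex.exp (-(c * ((|u| ^ Y : ℝ) : ℂ)))
  else Complex.exp (-((starRingEnd ℂ) c * ((|u| ^ Y : ℝ) : ℂ)))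

/-- The density of the strictly `Y`-stable law with characteristic function `stableCharFun c Y`. -/
def stableDensity (c : ℂ) (Y x : ℝ) : ℝ :=
  π⁻¹ * (stretchedLaplace c Y (x * Complex.I)).re

/-- The constant `T` in the right tail `T * x ^ (-1 - Y)` of `stableDensity c Y`. -/
def stableTail (c : ℂ) (Y : ℝ) : ℝ :=
  π⁻¹ * (-(c * Real.Gamma (1 + Y) * Complex.exp (-(1 + Y) * (π / 2 : ℝ) * Complex.I))).re

theorem continuous_stableCharFun (hY : 0 < Y) : Continuous (stableCharFun c Y) := by
  have hpow : Continuous fun u : ℝ => |u| ^ Y :=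
    (Real.continuous_rpow_const hY.le).comp (by fun_prop)
  refine Continuous.if_le (by fun_prop) (by fun_prop) (by fun_prop) (by fun_prop) ?_
  rintro u rfl
  simp [Real.zero_rpow hY.ne']

theorem norm_stableCharFun (u : ℝ) : ‖stableCharFun c Y u‖ = Real.exp (-(c.re * |u| ^ Y)) := by
  unfold stableCharFun
  split_ifs <;> simp [Complex.norm_exp]

theorem stableCharFun_neg (hY : 0 < Y) (u : ℝ) :
    stableCharFun c Y (-u) = (starRingEnd ℂ) (stableCharFun c Y u) := by
  rcases lt_trichotomy u 0 with h | rfl | h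
  · simp [stableCharFun, ← Complex.exp_conj, h.le, h.not_ge]
  · simp [stableCharFun, Real.zero_rpow hY.ne']
  · simp [stableCharFun, ← Complex.exp_conj, h.le, h]

theorem integrable_stableCharFun (hc : 0 < c.re) (hY : 0 < Y) :
    Integrable (stableCharFun c Y) := by
  have h := integrable_comp_abs_of_integrableOn_Ioi
    (integrableOn_rpow_mul_exp_neg_mul_rpow (s := 0) (by norm_num) hY hc)
  refine h.mono' (continuous_stableCharFun hY).aestronglyMeasurable
    (Eventually.of_forall fun u => ?_)
  rw [norm_stableCharFun, Real.rpow_zero, one_mul, neg_mul]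

theorem stableDensity_neg (x : ℝ) :
    stableDensity c Y (-x) = stableDensity ((starRingEnd ℂ) c) Y x := by
  rw [stableDensity, stableDensity, ← Complex.conj_re, stretchedLaplace, ← integral_conj]
  simp [stretchedLaplace, ← Complex.exp_conj]

theorem integral_exp_neg_mul_I_mul_stableCharFun (hc : 0 < c.re) (hY : 0 < Y) (x : ℝ) :
    ∫ u : ℝ, Complex.exp (-(x * Complex.I * u)) * stableCharFun c Y u =
      2 * π * stableDensity c Y x := by
  have hint : Integrable fun u : ℝ => Complex.exp (-(x * Complex.I * u)) * stableCharFun c Y u := by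
    refine (integrable_stableCharFun hc hY).bdd_mul (c := 1)
      (Continuous.aestronglyMeasurable (by fun_prop)) (Eventually.of_forall fun u => ?_)
    simp [Complex.norm_exp]
  have hpos : ∫ u in Ioi (0 : ℝ), Complex.exp (-(x * Complex.I * u)) * stableCharFun c Y u =
      stretchedLaplace c Y (x * Complex.I) := by
    refine setIntegral_congr_fun measurableSet_Ioi fun u hu => ?_
    have hu : 0 < u := hu
    rw [stableCharFun, if_pos hu.le, ← Complex.exp_add, abs_of_pos hu, neg_add]
  have hneg : ∫ u in Ioi (0 : ℝ), Complex.exp (-(x * Complex.I * (-u : ℝ))) *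
      stableCharFun c Y (-u) = (starRingEnd ℂ) (stretchedLaplace c Y (x * Complex.I)) := by
    rw [← hpos, ← integral_conj]
    simp [stableCharFun_neg hY, ← Complex.exp_conj]
  rw [integral_eq_integral_Ioi_add_integral_Ioi_neg hint, hpos, hneg, Complex.add_conj,
    stableDensity]
  push_cast
  field_simp [Real.pi_ne_zero]

theorem fourier_stableCharFun_comp_mul (hc : 0 < c.re) (hY : 0 < Y) (x : ℝ) :
    FourierTransform.fourier (fun ξ : ℝ => stableCharFun c Y (2 * π * ξ)) x =
      stableDensity c Y x := by
  have := Real.pi_pos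
  have h := Measure.integral_comp_mul_left
    (fun u : ℝ => Complex.exp (-(x * Complex.I * u)) * stableCharFun c Y u) (2 * π)
  rw [integral_exp_neg_mul_I_mul_stableCharFun hc hY] at h
  rw [Real.fourier_eq']
  trans ((|(2 * π)⁻¹| • (2 * π * stableDensity c Y x) : ℂ))
  · rw [← h]
    refine integral_congr_ae (Eventually.of_forall fun ξ => ?_)
    have harg : inner ℝ ξ x = x * ξ := by simp
    simp only [harg, smul_eq_mul]
    push_cast
    ring_nf
  · rw [abs_of_pos (by positivity), Complex.real_smul]
    push_cast
    field_simp [Real.pi_ne_zero]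

theorem integrable_stableCharFun_comp_mul (hc : 0 < c.re) (hY : 0 < Y) :
    Integrable fun ξ : ℝ => stableCharFun c Y (2 * π * ξ) :=
  (integrable_stableCharFun hc hY).comp_mul_left' (by positivity)

theorem continuous_stableDensity (hc : 0 < c.re) (hY : 0 < Y) :
    Continuous (stableDensity c Y) := by
  have h : Continuous (FourierTransform.fourier fun ξ : ℝ => stableCharFun c Y (2 * π * ξ)) :=
    VectorFourier.fourierIntegral_continuous Real.continuous_fourierChar (by fun_prop)
      (integrable_stableCharFun_comp_mul hc hY)
  have hre := Complex.continuous_re.comp h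
  simpa only [Function.comp_def, fourier_stableCharFun_comp_mul hc hY, Complex.ofReal_re] using hre

theorem exists_abs_stableDensity_le (c : ℂ) (Y : ℝ) : ∃ M : ℝ, ∀ x, |stableDensity c Y x| ≤ M := by
  refine ⟨π⁻¹ * ∫ r in Ioi (0 : ℝ), Real.exp (-(c.re * r ^ Y)), fun x => ?_⟩
  rw [stableDensity, abs_mul, abs_of_pos (inv_pos.2 Real.pi_pos)]
  gcongr
  refine (Complex.abs_re_le_norm _).trans ((norm_integral_le_integral_norm _).trans_eq ?_)
  simp [Complex.norm_exp]

theorem exists_abs_stableDensity_sub_stableTail_le (hc : 0 < c.re) (hY : 0 < Y) :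
    ∃ C : ℝ, ∀ x, 0 < x →
      |stableDensity c Y x - stableTail c Y * x ^ (-1 - Y)| ≤ C * x ^ (-1 - 2 * Y) := by
  obtain ⟨C, hC⟩ := exists_norm_stretchedLaplace_I_mul_sub_le hc hY
  refine ⟨π⁻¹ * C, fun x hx => ?_⟩
  have hpow : (x : ℂ) ^ (-(1 + Y) : ℂ) = ((x ^ (-1 - Y) : ℝ) : ℂ) := by
    rw [Complex.ofReal_cpow hx.le]
    push_cast
    ring_nf
  have hre : stableDensity c Y x - stableTail c Y * x ^ (-1 - Y) =
      π⁻¹ * (stretchedLaplace c Y (x * Complex.I) - ((x * Complex.I)⁻¹ -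
        c * Real.Gamma (1 + Y) * (x * Complex.I) ^ (-(1 + Y) : ℂ))).re := by
    have hinv : ((x : ℂ) * Complex.I)⁻¹.re = 0 := by simp
    have hmul : c * Real.Gamma (1 + Y) * (x * Complex.I) ^ (-(1 + Y) : ℂ) =
        ((x ^ (-1 - Y) : ℝ) : ℂ) *
          (c * Real.Gamma (1 + Y) * Complex.exp (-(1 + Y) * (π / 2 : ℝ) * Complex.I)) := by
      rw [ofReal_mul_I_cpow hx, hpow]
      ring
    rw [stableDensity, stableTail, Complex.sub_re, Complex.sub_re, hinv, hmul,
      Complex.re_ofReal_mul, Complex.neg_re]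
    ring
  rw [hre, abs_mul, abs_of_pos (inv_pos.2 Real.pi_pos), mul_assoc π⁻¹ C,
    show -1 - 2 * Y = -(1 + 2 * Y) by ring]
  exact mul_le_mul_of_nonneg_left ((Complex.abs_re_le_norm _).trans (hC x hx))
    (inv_nonneg.2 Real.pi_pos.le)

theorem exists_abs_stableDensity_sub_levyDensity_le (hc : 0 < c.re) (hY : 0 < Y) :
    ∃ C : ℝ, ∀ x, x ≠ 0 → |stableDensity c Y x -
      levyDensity Y (stableTail c Y) (stableTail ((starRingEnd ℂ) c) Y) 1 x| ≤
        C * |x| ^ (-1 - 2 * Y) := by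
  obtain ⟨C₁, hC₁⟩ := exists_abs_stableDensity_sub_stableTail_le hc hY
  obtain ⟨C₂, hC₂⟩ := exists_abs_stableDensity_sub_stableTail_le
    (c := (starRingEnd ℂ) c) (by simpa using hc) hY
  refine ⟨max C₁ C₂, fun x hx => ?_⟩
  rcases lt_or_gt_of_ne hx with hx | hx
  · have hx' : 0 < -x := neg_pos.2 hx
    rw [← neg_neg x, stableDensity_neg, levyDensity_neg_one, levyDensity_one_of_pos hx', abs_neg,
      abs_of_pos hx']
    exact (hC₂ _ hx').trans (by gcongr; exact le_max_right _ _)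
  · rw [levyDensity_one_of_pos hx, abs_of_pos hx]
    exact (hC₁ x hx).trans (by gcongr; exact le_max_left _ _)

theorem exists_abs_stableDensity_le_abs_rpow (hc : 0 < c.re) (hY : 0 < Y) :
    ∃ K : ℝ, ∀ x, x ≠ 0 → |stableDensity c Y x| ≤ K * |x| ^ (-1 - Y) := by
  obtain ⟨C, hC⟩ := exists_abs_stableDensity_sub_levyDensity_le hc hY
  obtain ⟨M, hM⟩ := exists_abs_stableDensity_le c Y
  have hM0 : 0 ≤ M := (abs_nonneg _).trans (hM 0)
  have hC0 : 0 ≤ C := by simpa using (abs_nonneg _).trans (hC 1 one_ne_zero)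
  set A := max |stableTail c Y| |stableTail ((starRingEnd ℂ) c) Y|
  have : 0 ≤ A := (abs_nonneg _).trans (le_max_left _ _)
  refine ⟨M + (C + A), fun x hx => ?_⟩
  have hx0 : 0 < |x| := abs_pos.2 hx
  rw [add_mul]
  rcases le_total |x| 1 with h1 | h1
  · have hone : 1 ≤ |x| ^ (-1 - Y) :=
      Real.one_le_rpow_of_pos_of_le_one_of_nonpos hx0 h1 (by linarith)
    exact ((hM x).trans (le_mul_of_one_le_right hM0 hone)).trans
      (le_add_of_nonneg_right (by positivity))
  · have hpow : |x| ^ (-1 - 2 * Y) ≤ |x| ^ (-1 - Y) :=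
      Real.rpow_le_rpow_of_exponent_le h1 (by linarith)
    have htri := abs_sub_abs_le_abs_sub (stableDensity c Y x)
      (levyDensity Y (stableTail c Y) (stableTail ((starRingEnd ℂ) c) Y) 1 x)
    have hlevy : |levyDensity Y (stableTail c Y) (stableTail ((starRingEnd ℂ) c) Y) 1 x| ≤
        A * |x| ^ (-1 - Y) := abs_levyDensity_one_le x
    have hmul := mul_le_mul_of_nonneg_left hpow hC0
    have hMx : 0 ≤ M * |x| ^ (-1 - Y) := by positivity
    linarith [hC x hx]

theorem integrable_stableDensity (hc : 0 < c.re) (hY : 0 < Y) :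
    Integrable (stableDensity c Y) := by
  obtain ⟨M, hM⟩ := exists_abs_stableDensity_le c Y
  obtain ⟨K, hK⟩ := exists_abs_stableDensity_le_abs_rpow hc hY
  exact integrable_of_norm_le_abs_rpow (continuous_stableDensity hc hY).aestronglyMeasurable
    (a := 0) (by norm_num) (b := -1 - Y) (by linarith) (fun x _ => by simpa using hM x) hK

theorem integral_exp_mul_I_mul_stableDensity (hc : 0 < c.re) (hY : 0 < Y) (u : ℝ) :
    ∫ x : ℝ, Complex.exp (u * x * Complex.I) * stableDensity c Y x = stableCharFun c Y u := by
  have := Real.pi_pos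
  have hF : FourierTransform.fourier (fun ξ : ℝ => stableCharFun c Y (2 * π * ξ)) =
      fun x => (stableDensity c Y x : ℂ) :=
    funext (fourier_stableCharFun_comp_mul hc hY)
  have hinv := Continuous.fourierInv_fourier_eq
    ((continuous_stableCharFun hY).comp (continuous_const_mul (2 * π)))
    (integrable_stableCharFun_comp_mul hc hY) (hF ▸ (integrable_stableDensity hc hY).ofReal)
  have hu : 2 * π * (u / (2 * π)) = u := by field_simp
  have h := congrFun hinv (u / (2 * π))
  simp only [Function.comp_def, hF, Real.fourierInv_eq', hu, smul_eq_mul] at h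
  rw [← h]
  refine integral_congr_ae (Eventually.of_forall fun x => ?_)
  have harg : 2 * π * inner ℝ x (u / (2 * π)) = u * x := by
    simp only [RCLike.inner_apply, conj_trivial]
    field_simp
  simp only [harg, Complex.ofReal_mul]

theorem eq_withDensity_stableDensity_of_charFun {μ : Measure ℝ} [IsFiniteMeasure μ]
    (hc : 0 < c.re) (hY : 0 < Y) (hμ : ∀ u, charFun μ u = stableCharFun c Y u) :
    0 ≤ᵐ[volume] stableDensity c Y ∧
      μ = volume.withDensity fun x => ENNReal.ofReal (stableDensity c Y x) := by
  refine eq_withDensity_ofReal_of_charFun (continuous_stableDensity hc hY).measurable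
    (integrable_stableDensity hc hY) fun u => ?_
  rw [hμ, ← integral_exp_mul_I_mul_stableDensity hc hY]
  simp [inner, mul_comm]

end StableDensity

/-! ### Vanishing of the second moment of the tail error -/

section SecondMoment

theorem one_sub_cos_eq_sq_mul_sinc_sq (t : ℝ) :
    1 - Real.cos t = t ^ 2 * (Real.sinc (t / 2) ^ 2 / 2) := by
  rcases eq_or_ne t 0 with rfl | ht
  · simp
  · have hcos : Real.cos t = 1 - 2 * Real.sin (t / 2) ^ 2 := by
      have h := Real.cos_two_mul (t / 2)
      rw [mul_div_cancel₀ t two_ne_zero] at h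
      linarith [Real.cos_sq_add_sin_sq (t / 2)]
    rw [Real.sinc_of_ne_zero (div_ne_zero ht two_ne_zero), hcos]
    field_simp
    ring

theorem isLittleO_rpow_rpow_nhdsGT_zero {a b : ℝ} (hab : a < b) :
    (fun u : ℝ => u ^ b) =o[𝓝[>] 0] fun u => u ^ a := by
  have htend : Tendsto (fun u : ℝ => u ^ (b - a)) (𝓝[>] 0) (𝓝 0) := by
    have h := (Real.continuous_rpow_const (sub_pos.2 hab).le).tendsto 0
    rw [Real.zero_rpow (sub_pos.2 hab).ne'] at h
    exact h.mono_left nhdsWithin_le_nhds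
  refine ((isLittleO_one_iff ℝ).2 htend |>.mul_isBigO (isBigO_refl (fun u : ℝ => u ^ a) _)).congr'
    ?_ (by simp)
  filter_upwards [self_mem_nhdsWithin] with u hu
  rw [← Real.rpow_add hu, sub_add_cancel]

variable {f : ℝ → ℝ}

theorem integral_one_sub_cos_mul (u : ℝ) :
    ∫ x, (1 - Real.cos (u * x)) * f x =
      u ^ 2 * ∫ x, Real.sinc (u * x / 2) ^ 2 / 2 * (x ^ 2 * f x) := by
  rw [← integral_const_mul]
  refine integral_congr_ae (Eventually.of_forall fun x => ?_)
  simp only [one_sub_cos_eq_sq_mul_sinc_sq]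
  ring

theorem sinc_sq_div_two_le_one (t : ℝ) : ‖Real.sinc t ^ 2 / 2‖ ≤ 1 := by
  rw [Real.norm_of_nonneg (by positivity)]
  nlinarith [(sq_le_one_iff_abs_le_one _).2 (Real.abs_sinc_le_one t)]

theorem integrable_one_sub_cos_mul (hf : Integrable fun x => x ^ 2 * f x) (u : ℝ) :
    Integrable fun x => (1 - Real.cos (u * x)) * f x := by
  have hcont : Continuous fun x : ℝ => Real.sinc (u * x / 2) ^ 2 / 2 := by
    have := Real.continuous_sinc
    fun_prop
  refine ((hf.bdd_mul hcont.aestronglyMeasurable (Eventually.of_forall fun x =>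
    sinc_sq_div_two_le_one (u * x / 2))).const_mul (u ^ 2)).congr (Eventually.of_forall fun x => ?_)
  simp only [one_sub_cos_eq_sq_mul_sinc_sq]
  ring

theorem continuous_integral_sinc_sq_mul {g : ℝ → ℝ} (hg : Integrable g) :
    Continuous fun u : ℝ => ∫ x, Real.sinc (u * x / 2) ^ 2 / 2 * g x := by
  have := Real.continuous_sinc
  refine continuous_of_dominated (bound := fun x => ‖g x‖) (fun u => ?_) (fun u => ?_) hg.norm ?_
  · exact (Continuous.aestronglyMeasurable (by fun_prop)).mul hg.aestronglyMeasurable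
  · refine Eventually.of_forall fun x => ?_
    rw [norm_mul]
    exact mul_le_of_le_one_left (norm_nonneg _) (sinc_sq_div_two_le_one _)
  · exact Eventually.of_forall fun x => by fun_prop

theorem integral_sq_mul_eq_zero_of_isBigO {κ a b : ℝ} (ha : a < 2) (hb : 2 < b)
    (hf : Integrable fun x => x ^ 2 * f x)
    (h : (fun u => (∫ x, (1 - Real.cos (u * x)) * f x) - κ * u ^ a) =O[𝓝[>] 0] fun u => u ^ b) :
    ∫ x, x ^ 2 * f x = 0 := by
  simp only [integral_one_sub_cos_mul] at h
  set G : ℝ → ℝ := fun u => ∫ x, Real.sinc (u * x / 2) ^ 2 / 2 * (x ^ 2 * f x) with hG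
  have hcont : Tendsto G (𝓝[>] 0) (𝓝 (G 0)) :=
    ((continuous_integral_sinc_sq_mul hf).tendsto 0).mono_left nhdsWithin_le_nhds
  have hsq : (fun u => u ^ 2 * G u) =o[𝓝[>] 0] fun u => u ^ a := by
    have hO : (fun u => u ^ 2 * G u) =O[𝓝[>] 0] fun u : ℝ => u ^ (2 : ℝ) := by
      simpa using (isBigO_refl (fun u : ℝ => u ^ 2) (𝓝[>] 0)).mul (hcont.isBigO_one ℝ)
    exact hO.trans_isLittleO (isLittleO_rpow_rpow_nhdsGT_zero ha)
  have hκ : κ = 0 := by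
    by_contra hκ
    have hlittle : (fun u => κ * u ^ a) =o[𝓝[>] 0] fun u : ℝ => u ^ a := by
      refine (hsq.sub (h.trans_isLittleO
        (isLittleO_rpow_rpow_nhdsGT_zero (ha.trans hb)))).congr_left fun u => ?_
      simp only [hG]
      ring
    refine isLittleO_irrefl (Eventually.frequently ?_) ((isLittleO_const_mul_left_iff hκ).1 hlittle)
    filter_upwards [self_mem_nhdsWithin] with u hu
    exact (Real.rpow_pos_of_pos hu a).ne'
  have hzero : Tendsto G (𝓝[>] 0) (𝓝 0) := by
    have hdiv := ((h.trans_isLittleO (isLittleO_rpow_rpow_nhdsGT_zero hb)).tendsto_div_nhds_zero)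
    refine hdiv.congr' ?_
    filter_upwards [self_mem_nhdsWithin] with u hu
    rw [hκ, zero_mul, sub_zero, Real.rpow_two, mul_div_cancel_left₀ _ (pow_ne_zero 2 (ne_of_gt hu))]
  have hG0 : (∫ x, 1 / 2 * (x ^ 2 * f x)) = 0 := by
    simpa [hG] using tendsto_nhds_unique hcont hzero
  rw [integral_const_mul] at hG0
  linarith

end SecondMoment

section StableTailError

variable {c : ℂ} {Y : ℝ}

/-- The difference between the stable density and the Lévy density of the same process: what is
left of the density once its leading power-law tails are removed. -/
def stableTailError (c : ℂ) (Y x : ℝ) : ℝ :=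
  stableDensity c Y x -
    levyDensity Y (stableTail c Y) (stableTail ((starRingEnd ℂ) c) Y) 1 x

theorem measurable_stableTailError (hc : 0 < c.re) (hY : 0 < Y) :
    Measurable (stableTailError c Y) :=
  (continuous_stableDensity hc hY).measurable.sub measurable_levyDensity_one

theorem exists_abs_stableTailError_le_abs_rpow_neg_one_sub (hc : 0 < c.re) (hY : 0 < Y) :
    ∃ K : ℝ, ∀ x, x ≠ 0 → |stableTailError c Y x| ≤ K * |x| ^ (-1 - Y) := by
  obtain ⟨K, hK⟩ := exists_abs_stableDensity_le_abs_rpow hc hY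
  refine ⟨K + max |stableTail c Y| |stableTail ((starRingEnd ℂ) c) Y|, fun x hx => ?_⟩
  rw [add_mul]
  exact (abs_sub _ _).trans (add_le_add (hK x hx) (abs_levyDensity_one_le x))

theorem integrable_sq_mul_stableTailError (hc : 0 < c.re) (hY1 : 1 < Y) (hY2 : Y < 2) :
    Integrable fun x => x ^ 2 * stableTailError c Y x := by
  have hY : 0 < Y := one_pos.trans hY1
  obtain ⟨C, hC⟩ := exists_abs_stableDensity_sub_levyDensity_le hc hY
  obtain ⟨K, hK⟩ := exists_abs_stableTailError_le_abs_rpow_neg_one_sub hc hY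
  exact integrable_of_norm_le_abs_rpow
    ((measurable_id.pow_const 2).mul (measurable_stableTailError hc hY)).aestronglyMeasurable
    (a := (2 : ℕ) - 1 - Y) (by push_cast; linarith) (b := (2 : ℕ) - 1 - 2 * Y)
    (by push_cast; linarith) (fun x hx => abs_pow_mul_le_mul_abs_rpow 2 hx (hK x hx))
    fun x hx => abs_pow_mul_le_mul_abs_rpow 2 hx (hC x hx)

theorem integral_cos_mul_stableDensity (hc : 0 < c.re) (hY : 0 < Y) (u : ℝ) :
    ∫ x, Real.cos (u * x) * stableDensity c Y x = (stableCharFun c Y u).re := by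
  have hint : Integrable fun x : ℝ => Complex.exp (u * x * Complex.I) * stableDensity c Y x := by
    refine (integrable_stableDensity hc hY).ofReal.bdd_mul (c := 1)
      (Continuous.aestronglyMeasurable (by fun_prop)) (Eventually.of_forall fun x => ?_)
    rw [← Complex.ofReal_mul, Complex.norm_exp_ofReal_mul_I]
  have hre := integral_re (𝕜 := ℂ) hint
  simp only [RCLike.re_to_complex] at hre
  rw [← integral_exp_mul_I_mul_stableDensity hc hY, ← hre]
  simp only [Complex.re_mul_ofReal, ← Complex.ofReal_mul, Complex.exp_ofReal_mul_I_re]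

theorem integral_one_sub_cos_mul_stableDensity (hc : 0 < c.re) (hY : 0 < Y) (u : ℝ) :
    Integrable (fun x => (1 - Real.cos (u * x)) * stableDensity c Y x) ∧
      ∫ x, (1 - Real.cos (u * x)) * stableDensity c Y x = 1 - (stableCharFun c Y u).re := by
  have hint := integrable_stableDensity hc hY
  have hcos : Integrable fun x => Real.cos (u * x) * stableDensity c Y x :=
    hint.bdd_mul (Continuous.aestronglyMeasurable (by fun_prop))
      (Eventually.of_forall fun x => Real.abs_cos_le_one (u * x))
  have hone : ∫ x, stableDensity c Y x = 1 := by
    have h := integral_cos_mul_stableDensity hc hY 0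
    simpa [stableCharFun, Real.zero_rpow hY.ne'] using h
  simp only [sub_mul, one_mul]
  exact ⟨hint.sub hcos, by rw [integral_sub hint hcos, hone, integral_cos_mul_stableDensity hc hY]⟩

theorem integral_one_sub_cos_mul_levyDensity {Cp Cm u : ℝ} (hu : 0 < u) :
    ∫ x, (1 - Real.cos (u * x)) * levyDensity Y Cp Cm 1 x =
      u ^ Y * ∫ x, (1 - Real.cos x) * levyDensity Y Cp Cm 1 x := by
  have h := Measure.integral_comp_mul_left
    (fun x => (1 - Real.cos x) * levyDensity Y Cp Cm 1 x) u
  simp only [levyDensity_one_mul hu, mul_left_comm _ (u ^ (-1 - Y)), integral_const_mul] at h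
  have hpow : u ^ (1 + Y) * u ^ (-1 - Y) = 1 := by
    rw [← Real.rpow_add hu]; ring_nf; exact Real.rpow_zero u
  calc _ = u ^ (1 + Y) * (u ^ (-1 - Y) *
        ∫ x, (1 - Real.cos (u * x)) * levyDensity Y Cp Cm 1 x) := by
        rw [← mul_assoc, hpow, one_mul]
    _ = _ := by
        rw [h, abs_of_pos (inv_pos.2 hu), smul_eq_mul, ← mul_assoc, ← Real.rpow_neg_one,
          ← Real.rpow_add hu]
        ring_nf

theorem abs_one_sub_re_stableCharFun_sub_le {u : ℝ} (hc : 0 ≤ c.re) (hu : 0 < u) :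
    |1 - (stableCharFun c Y u).re - c.re * u ^ Y| ≤ 3 * ‖c‖ ^ 2 * u ^ (2 * Y) := by
  have hw : 0 ≤ (c * ((u ^ Y : ℝ) : ℂ)).re := by
    rw [Complex.re_mul_ofReal]
    positivity
  have h := (Complex.abs_re_le_norm _).trans (norm_exp_neg_sub_one_add_le hw)
  have hpow : (u ^ Y) ^ 2 = u ^ (2 * Y) := by
    rw [← Real.rpow_mul_natCast hu.le, mul_comm, Nat.cast_ofNat]
  rw [norm_mul, Complex.norm_real, Real.norm_of_nonneg (by positivity), mul_pow, ← mul_assoc,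
    hpow, Complex.add_re, Complex.sub_re, Complex.one_re, Complex.re_mul_ofReal] at h
  rw [stableCharFun, if_pos hu.le, abs_of_pos hu, ← abs_neg]
  refine (congrArg _ ?_).trans_le h
  ring

theorem integral_sq_mul_stableTailError (hc : 0 < c.re) (hY1 : 1 < Y) (hY2 : Y < 2) :
    ∫ x, x ^ 2 * stableTailError c Y x = 0 := by
  have hY : 0 < Y := one_pos.trans hY1
  have hint := integrable_sq_mul_stableTailError hc hY1 hY2
  set levy := levyDensity Y (stableTail c Y) (stableTail ((starRingEnd ℂ) c) Y) 1 with hlevy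
  have herror : ∀ u : ℝ, 0 < u → ∫ x, (1 - Real.cos (u * x)) * stableTailError c Y x =
      1 - (stableCharFun c Y u).re - u ^ Y * ∫ x, (1 - Real.cos x) * levy x := by
    intro u hu
    obtain ⟨hdens, hval⟩ := integral_one_sub_cos_mul_stableDensity hc hY u
    have hsplit : ∫ x, (1 - Real.cos (u * x)) * levy x =
        ∫ x, ((1 - Real.cos (u * x)) * stableDensity c Y x -
          (1 - Real.cos (u * x)) * stableTailError c Y x) := by
      simp only [← mul_sub, stableTailError, ← hlevy, sub_sub_cancel]
    rw [integral_sub hdens (integrable_one_sub_cos_mul hint u), hval, hlevy,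
      integral_one_sub_cos_mul_levyDensity hu] at hsplit
    linarith
  refine integral_sq_mul_eq_zero_of_isBigO (κ := c.re - ∫ x, (1 - Real.cos x) * levy x) hY2
    (b := 2 * Y) (by linarith) hint (IsBigO.of_bound (3 * ‖c‖ ^ 2) ?_)
  filter_upwards [self_mem_nhdsWithin] with u hu
  have hu : 0 < u := hu
  rw [herror u hu, Real.norm_eq_abs, Real.norm_of_nonneg (by positivity)]
  convert abs_one_sub_re_stableCharFun_sub_le hc.le hu using 2
  ring

end StableTailError

/-! ### The exponent of the stable law -/

section StableExponent

variable {Y Cp Cm : ℝ}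

theorem gamma_neg_pos_of_one_lt_of_lt_two (hY1 : 1 < Y) (hY2 : Y < 2) : 0 < Real.Gamma (-Y) := by
  have hone : Real.Gamma (1 - Y) = -Y * Real.Gamma (-Y) := by
    rw [← Real.Gamma_add_one (by linarith), neg_add_eq_sub]
  have htwo : Real.Gamma (2 - Y) = (1 - Y) * Real.Gamma (1 - Y) := by
    rw [← Real.Gamma_add_one (by linarith)]
    ring_nf
  have hpos : 0 < (Y * (Y - 1)) * Real.Gamma (-Y) :=
    calc 0 < Real.Gamma (2 - Y) := Real.Gamma_pos_of_pos (by linarith)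
      _ = (Y * (Y - 1)) * Real.Gamma (-Y) := by rw [htwo, hone]; ring
  exact pos_of_mul_pos_right hpos (by nlinarith)

theorem cos_pi_mul_div_two_neg (hY1 : 1 < Y) (hY2 : Y < 2) : Real.cos (π * Y / 2) < 0 := by
  apply Real.cos_neg_of_pi_div_two_lt_of_lt <;> nlinarith [Real.pi_pos]

theorem varsigma_rpow (hY1 : 1 < Y) (hY2 : Y < 2) (hC : 0 ≤ Cp + Cm) :
    varsigma Y Cp Cm ^ Y = -Real.Gamma (-Y) * (Cp + Cm) * Real.cos (π * Y / 2) := by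
  have := gamma_neg_pos_of_one_lt_of_lt_two hY1 hY2
  rw [varsigma, ← Real.rpow_mul (by positivity), one_div_mul_cancel (by linarith), Real.rpow_one,
    abs_of_neg (cos_pi_mul_div_two_neg hY1 hY2)]
  ring

theorem stablePart_one (hY1 : 1 < Y) (hY2 : Y < 2) (hC : 0 < Cp + Cm) :
    stablePart Y Cp Cm 1 = -Real.Gamma (-Y) *
      (Cp * Complex.exp (-(π * Y / 2 : ℝ) * Complex.I) +
        Cm * Complex.exp ((π * Y / 2 : ℝ) * Complex.I)) := by
  have hcos : Complex.cos (π * Y / 2 : ℝ) ≠ 0 := by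
    exact_mod_cast (cos_pi_mul_div_two_neg hY1 hY2).ne
  have hsum : (Cp + Cm : ℂ) ≠ 0 := by exact_mod_cast hC.ne'
  rw [stablePart, abs_one, Real.one_rpow, mul_one, varsigma_rpow hY1 hY2 hC.le, Real.sign_one,
    Complex.ofReal_tan, Complex.tan_eq_sin_div_cos, ← Complex.ofReal_neg, Complex.exp_mul_I,
    Complex.exp_mul_I]
  push_cast at hcos ⊢
  rw [Complex.cos_neg, Complex.sin_neg]
  field_simp
  ring

theorem conj_stablePart_one (hY1 : 1 < Y) (hY2 : Y < 2) (hC : 0 < Cp + Cm) :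
    (starRingEnd ℂ) (stablePart Y Cp Cm 1) = stablePart Y Cm Cp 1 := by
  rw [stablePart_one hY1 hY2 hC, stablePart_one hY1 hY2 (by linarith)]
  simp only [map_mul, map_add, map_neg, Complex.conj_ofReal, ← Complex.exp_conj, Complex.conj_I,
    mul_neg, neg_mul, neg_neg]
  ring

theorem re_stablePart_one_pos (hY1 : 1 < Y) (hY2 : Y < 2) (hC : 0 < Cp + Cm) :
    0 < (stablePart Y Cp Cm 1).re := by
  have hre : (stablePart Y Cp Cm 1).re =
      Real.Gamma (-Y) * (Cp + Cm) * -Real.cos (π * Y / 2) := by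
    rw [stablePart_one hY1 hY2 hC, ← Complex.ofReal_neg, ← Complex.ofReal_neg,
      Complex.re_ofReal_mul, Complex.add_re, Complex.re_ofReal_mul, Complex.re_ofReal_mul,
      Complex.exp_ofReal_mul_I_re, Complex.exp_ofReal_mul_I_re, Real.cos_neg]
    ring
  rw [hre]
  exact mul_pos (mul_pos (gamma_neg_pos_of_one_lt_of_lt_two hY1 hY2) hC)
    (neg_pos.2 (cos_pi_mul_div_two_neg hY1 hY2))

theorem stableCF_eq_stableCharFun (hY1 : 1 < Y) (hY2 : Y < 2) (hC : 0 < Cp + Cm) (u : ℝ) :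
    stableCF Y Cp Cm u = stableCharFun (stablePart Y Cp Cm 1) Y u := by
  rw [stableCF, stableCharFun, conj_stablePart_one hY1 hY2 hC]
  rcases lt_trichotomy u 0 with hu | rfl | hu
  · rw [if_neg hu.not_ge]
    have hswap : varsigma Y Cm Cp = varsigma Y Cp Cm := by rw [varsigma, varsigma, add_comm]
    rw [stablePart, stablePart, hswap, Real.sign_of_neg hu, Real.sign_one, abs_one, Real.one_rpow]
    push_cast
    ring_nf
  · simp [stablePart, Real.zero_rpow (by linarith : Y ≠ 0)]
  · rw [if_pos hu.le]
    rw [stablePart, stablePart, Real.sign_of_pos hu, Real.sign_one, abs_one, Real.one_rpow]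
    push_cast
    ring_nf

/-- The reflection formula for the Gamma function turns the exponent back into the Lévy density. -/
theorem stableTail_stablePart_one (hY1 : 1 < Y) (hY2 : Y < 2) (hC : 0 < Cp + Cm) :
    stableTail (stablePart Y Cp Cm 1) Y = Cp := by
  have hsin : Real.sin (π * Y) ≠ 0 := by
    have h : 0 < Real.sin (π * Y - π) := by
      apply Real.sin_pos_of_pos_of_lt_pi <;> nlinarith [Real.pi_pos]
    rw [Real.sin_sub_pi] at h
    exact (neg_pos.1 h).ne
  have hgamma : Real.Gamma (-Y) * Real.Gamma (1 + Y) = -(π / Real.sin (π * Y)) := by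
    have h := Real.Gamma_mul_Gamma_one_sub (-Y)
    rwa [sub_neg_eq_add, mul_neg, Real.sin_neg, div_neg] at h
  have hprod : -(stablePart Y Cp Cm 1 * Real.Gamma (1 + Y) *
      Complex.exp (-(1 + Y) * (π / 2 : ℝ) * Complex.I)) =
      (Real.Gamma (-Y) * Real.Gamma (1 + Y) : ℝ) *
        (-Complex.I * (Cp * Complex.exp ((-(π * Y) : ℝ) * Complex.I) + Cm)) := by
    have hexp : Complex.exp (-(1 + Y) * (π / 2 : ℝ) * Complex.I) =
        -Complex.I * Complex.exp (-(π * Y / 2 : ℝ) * Complex.I) := by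
      rw [← Complex.exp_neg_pi_div_two_mul_I, ← Complex.exp_add]
      push_cast
      ring_nf
    have hinv : Complex.exp ((π * Y / 2 : ℝ) * Complex.I) *
        Complex.exp (-(π * Y / 2 : ℝ) * Complex.I) = 1 := by
      rw [← Complex.exp_add, neg_mul, add_neg_cancel, Complex.exp_zero]
    have hsq : Complex.exp ((-(π * Y) : ℝ) * Complex.I) =
        Complex.exp (-(π * Y / 2 : ℝ) * Complex.I) ^ 2 := by
      rw [← Complex.exp_nat_mul]
      push_cast
      ring_nf
    rw [stablePart_one hY1 hY2 hC, hexp, hsq, Complex.ofReal_mul]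
    linear_combination -Complex.I * Real.Gamma (-Y) * Real.Gamma (1 + Y) * Cm * hinv
  have hre : (-Complex.I * (Cp * Complex.exp ((-(π * Y) : ℝ) * Complex.I) + Cm)).re =
      -Cp * Real.sin (π * Y) := by
    simp only [Complex.mul_re, Complex.add_im, Complex.im_ofReal_mul, Complex.exp_ofReal_mul_I_im,
      Complex.ofReal_im, Real.sin_neg, Complex.neg_re, Complex.neg_im, Complex.I_re, Complex.I_im]
    ring
  rw [stableTail, hprod, hgamma, Complex.re_ofReal_mul, hre]
  field_simp

end StableExponent

/-! ### Truncated moments of a density -/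

section TruncatedMoment

theorem abs_setIntegral_le_two_mul_setIntegral {f F : ℝ → ℝ} {s u : Set ℝ} (hs : MeasurableSet s)
    (hu : MeasurableSet u) (hupos : u ⊆ Ioi 0) (hsu : ∀ x ∈ s, x ≠ 0 → |x| ∈ u)
    (hF : IntegrableOn F u) (hFnonneg : ∀ r ∈ u, 0 ≤ F r) (hf : ∀ x ≠ 0, |f x| ≤ F |x|) :
    |∫ x in s, f x| ≤ 2 * ∫ r in u, F r := by
  have hint : IntegrableOn (u.indicator F) (Ioi 0) :=
    ((integrable_indicator_iff hu).2 hF).integrableOn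
  calc |∫ x in s, f x| = ‖∫ x, s.indicator f x‖ := by rw [integral_indicator hs, Real.norm_eq_abs]
    _ ≤ ∫ x, u.indicator F |x| := by
        refine norm_integral_le_of_norm_le (integrable_comp_abs_of_integrableOn_Ioi hint) ?_
        filter_upwards [Measure.ae_ne volume 0] with x hx
        by_cases hxs : x ∈ s
        · rw [indicator_of_mem hxs, indicator_of_mem (hsu x hxs hx)]
          exact hf x hx
        · rw [indicator_of_notMem hxs, norm_zero]
          exact indicator_nonneg hFnonneg _
    _ = 2 * ∫ r in u, F r := by
        rw [integral_comp_abs, setIntegral_indicator hu, inter_eq_right.2 hupos]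

variable {f : ℝ → ℝ} {s : Set ℝ} {n : ℕ} {q K r : ℝ}

theorem nonneg_of_abs_le_mul_abs_rpow {a : ℝ} (hf : ∀ x ≠ 0, |f x| ≤ K * |x| ^ a) : 0 ≤ K := by
  simpa using (abs_nonneg _).trans (hf 1 one_ne_zero)

theorem integrableOn_const_mul_rpow_Ioc {a : ℝ} (ha : -1 < a) (hr : 0 ≤ r) (K : ℝ) :
    IntegrableOn (fun x : ℝ => K * x ^ a) (Ioc 0 r) := by
  rw [← intervalIntegrable_iff_integrableOn_Ioc_of_le hr]
  exact (intervalIntegral.intervalIntegrable_rpow' ha).const_mul K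

theorem abs_setIntegral_pow_mul_le_of_subset_Icc (hq : q < n) (hr : 0 ≤ r)
    (hf : ∀ x ≠ 0, |f x| ≤ K * |x| ^ (-1 - q)) (hs : MeasurableSet s) (hsr : s ⊆ Icc (-r) r) :
    |∫ x in s, x ^ n * f x| ≤ 2 * K / (n - q) * r ^ (n - q) := by
  have hK := nonneg_of_abs_le_mul_abs_rpow hf
  refine (abs_setIntegral_le_two_mul_setIntegral hs measurableSet_Ioc (fun x hx => hx.1)
    (fun x hx hx0 => ⟨abs_pos.2 hx0, abs_le.2 (hsr hx)⟩)
    (integrableOn_const_mul_rpow_Ioc (by linarith) hr K)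
    (fun x hx => mul_nonneg hK (Real.rpow_nonneg hx.1.le _))
    fun x hx => abs_pow_mul_le_mul_abs_rpow n hx (hf x hx)).trans_eq ?_
  rw [← intervalIntegral.integral_of_le hr, intervalIntegral.integral_const_mul,
    integral_rpow (Or.inl (by linarith)), show (n : ℝ) - 1 - q + 1 = n - q by ring,
    Real.zero_rpow (sub_pos.2 hq).ne']
  ring

theorem abs_setIntegral_pow_mul_le_of_forall_lt_abs (hq : n < q) (hr : 0 < r)
    (hf : ∀ x ≠ 0, |f x| ≤ K * |x| ^ (-1 - q)) (hs : MeasurableSet s) (hsr : ∀ x ∈ s, r < |x|) :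
    |∫ x in s, x ^ n * f x| ≤ 2 * K / (q - n) * r ^ (n - q) := by
  have hK := nonneg_of_abs_le_mul_abs_rpow hf
  have hexp : (n : ℝ) - 1 - q < -1 := by linarith
  refine (abs_setIntegral_le_two_mul_setIntegral hs measurableSet_Ioi
    (fun x hx => hr.trans hx) (fun x hx _ => hsr x hx)
    ((integrableOn_Ioi_rpow_of_lt hexp hr).const_mul K)
    (fun x hx => mul_nonneg hK (Real.rpow_nonneg (hr.trans hx).le _))
    fun x hx => abs_pow_mul_le_mul_abs_rpow n hx (hf x hx)).trans_eq ?_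
  rw [integral_const_mul, integral_Ioi_rpow_of_lt hexp hr,
    show (n : ℝ) - 1 - q + 1 = -(q - n) by ring, neg_div_neg_eq, neg_sub]
  ring

/-- The `n`-th moment of the density `f` truncated to the window `|x + t| ≤ 1`. -/
def truncatedMoment (n : ℕ) (f : ℝ → ℝ) (t : ℝ) : ℝ :=
  ∫ x in Icc (-1 - t) (1 - t), x ^ n * f x

theorem Icc_neg_one_sub_subset_Icc (t : ℝ) :
    Icc (-1 - t) (1 - t) ⊆ Icc (-(1 + |t|)) (1 + |t|) :=
  Icc_subset_Icc (by linarith [le_abs_self t]) (by linarith [neg_abs_le t])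

theorem integrableOn_pow_mul_Icc_sub (hq : q < n) (hmeas : AEStronglyMeasurable f)
    (hf : ∀ x ≠ 0, |f x| ≤ K * |x| ^ (-1 - q)) (t : ℝ) :
    IntegrableOn (fun x => x ^ n * f x) (Icc (-1 - t) (1 - t)) := by
  have hbound := (integrable_indicator_iff measurableSet_Ioc).2
    (integrableOn_const_mul_rpow_Ioc (a := n - 1 - q) (by linarith) (r := 1 + |t|)
      (by positivity) K)
  refine (integrable_comp_abs_of_integrableOn_Ioi hbound.integrableOn).integrableOn.mono'
    ((continuous_pow n).aestronglyMeasurable.mul hmeas).restrict ?_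
  filter_upwards [ae_restrict_mem measurableSet_Icc, ae_restrict_of_ae (Measure.ae_ne volume 0)]
    with x hx hx0
  have hmem : |x| ∈ Ioc 0 (1 + |t|) :=
    ⟨abs_pos.2 hx0, abs_le.2 (Icc_neg_one_sub_subset_Icc t hx)⟩
  rw [indicator_of_mem hmem]
  exact abs_pow_mul_le_mul_abs_rpow n hx0 (hf x hx0)

theorem abs_truncatedMoment_le (hq : q < n) (hf : ∀ x ≠ 0, |f x| ≤ K * |x| ^ (-1 - q)) (t : ℝ) :
    |truncatedMoment n f t| ≤ 2 * K / (n - q) * (1 + |t|) ^ (n - q) :=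
  abs_setIntegral_pow_mul_le_of_subset_Icc hq (by positivity) hf measurableSet_Icc
    (Icc_neg_one_sub_subset_Icc t)

/-- The density of `b * Z` when `Z` has density `f` and `0 < b`. -/
def scaledDensity (b : ℝ) (f : ℝ → ℝ) (x : ℝ) : ℝ := b⁻¹ * f (b⁻¹ * x)

variable {b : ℝ}

theorem abs_scaledDensity_le (hb : 0 < b) (hf : ∀ x ≠ 0, |f x| ≤ K * |x| ^ (-1 - q)) :
    ∀ x ≠ 0, |scaledDensity b f x| ≤ K * b ^ q * |x| ^ (-1 - q) := by
  intro x hx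
  have hpow : b⁻¹ * b⁻¹ ^ (-1 - q) = b ^ q := by
    rw [Real.inv_rpow hb.le, ← Real.rpow_neg_one, ← Real.rpow_neg hb.le, ← Real.rpow_add hb]
    ring_nf
  calc |scaledDensity b f x| = b⁻¹ * |f (b⁻¹ * x)| := by
        rw [scaledDensity, abs_mul, abs_of_pos (inv_pos.2 hb)]
    _ ≤ b⁻¹ * (K * |b⁻¹ * x| ^ (-1 - q)) := by
        gcongr
        exact hf _ (mul_ne_zero (inv_ne_zero hb.ne') hx)
    _ = K * b ^ q * |x| ^ (-1 - q) := by
        rw [abs_mul, abs_of_pos (inv_pos.2 hb), Real.mul_rpow (by positivity) (abs_nonneg x),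
          ← hpow]
        ring

theorem integral_mul_scaledDensity (hb : 0 < b) (g : ℝ → ℝ) :
    ∫ x, g x * scaledDensity b f x = ∫ x, g (b * x) * f x := by
  have h := Measure.integral_comp_mul_left (fun x => g (b * x) * f x) b⁻¹
  simp only [mul_inv_cancel_left₀ hb.ne', inv_inv, abs_of_pos hb, smul_eq_mul] at h
  simp only [scaledDensity, mul_left_comm _ b⁻¹, integral_const_mul, h,
    inv_mul_cancel_left₀ hb.ne']

theorem integrable_mul_scaledDensity (hb : 0 < b) {g : ℝ → ℝ}
    (h : Integrable fun x => g (b * x) * f x) : Integrable fun x => g x * scaledDensity b f x := by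
  simpa only [scaledDensity, mul_inv_cancel_left₀ hb.ne', mul_left_comm _ b⁻¹] using
    (h.comp_mul_left' (inv_ne_zero hb.ne')).const_mul b⁻¹

theorem truncatedMoment_scaledDensity (hb : 0 < b) (n : ℕ) (f : ℝ → ℝ) (t : ℝ) :
    truncatedMoment n (scaledDensity b f) t =
      ∫ x, (b * x) ^ n * {x : ℝ | |x| ≤ 1}.indicator (fun _ => 1) (b * x + t) * f x := by
  rw [← integral_mul_scaledDensity hb
      fun x => x ^ n * {x : ℝ | |x| ≤ 1}.indicator (fun _ => 1) (x + t),
    truncatedMoment, ← integral_indicator measurableSet_Icc]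
  refine integral_congr_ae (Eventually.of_forall fun x => ?_)
  have hmem : x ∈ Icc (-1 - t) (1 - t) ↔ x + t ∈ {x : ℝ | |x| ≤ 1} := by
    rw [mem_ofPred_eq, abs_le, mem_Icc, sub_le_iff_le_add, le_sub_iff_add_le]
  by_cases hx : x ∈ Icc (-1 - t) (1 - t)
  · simp only [indicator_of_mem hx, indicator_of_mem (hmem.1 hx), mul_one]
  · simp only [indicator_of_notMem hx, indicator_of_notMem (mt hmem.2 hx), mul_zero, zero_mul]

theorem scaledDensity_levyDensity_one {Y Cp Cm : ℝ} (hb : 0 < b) (x : ℝ) :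
    scaledDensity b (levyDensity Y Cp Cm 1) x = b ^ Y * levyDensity Y Cp Cm 1 x := by
  rw [scaledDensity, levyDensity_one_mul (inv_pos.2 hb), ← mul_assoc, Real.inv_rpow hb.le,
    ← Real.rpow_neg_one, ← Real.rpow_neg hb.le, ← Real.rpow_add hb]
  ring_nf

end TruncatedMoment

/-! ### Taylor expansion of the truncated moments of the Lévy density -/

section LevyMoment

theorem isBigO_one_add_rpow_sub_sum_choose (a : ℝ) (m : ℕ) :
    (fun x : ℝ => (1 + x) ^ a - ∑ j ∈ Finset.range m, Ring.choose a j * x ^ j) =O[𝓝 0]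
      fun x => x ^ m := by
  have h := (Real.one_add_rpow_hasFPowerSeriesAt_zero (a := a)).isBigO_sub_partialSum_pow m
  simp only [zero_add, FormalMultilinearSeries.partialSum, binomialSeries_apply, List.ofFn_const,
    List.prod_replicate, smul_eq_mul, ← norm_pow] at h
  exact h.of_norm_right

theorem choose_two_eq_mul_sub_one_div_two (a : ℝ) : Ring.choose a 2 = a * (a - 1) / 2 := by
  have h : Nat.factorial 2 • Ring.choose a 2 = a * (a - 1) := by
    rw [← Ring.descPochhammer_eq_factorial_smul_choose, descPochhammer_succ_right,
      Polynomial.smeval_mul, descPochhammer_one, Polynomial.smeval_X, Polynomial.smeval_sub,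
      Polynomial.smeval_X, Polynomial.smeval_natCast]
    simp
  rw [Nat.factorial_two, nsmul_eq_mul, Nat.cast_ofNat] at h
  linarith

variable {Y Cp Cm t : ℝ} {n : ℕ}

theorem intervalIntegral_pow_mul_levyDensity_one (hn : Y < n) {r : ℝ} (hr : 0 ≤ r) :
    ∫ x in 0..r, x ^ n * levyDensity Y Cp Cm 1 x = Cp * r ^ (n - Y) / (n - Y) := by
  have hcongr : ∫ x in 0..r, x ^ n * levyDensity Y Cp Cm 1 x =
      ∫ x in 0..r, Cp * x ^ (n - 1 - Y) := by
    refine intervalIntegral.integral_congr_ae (Eventually.of_forall fun x hx => ?_)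
    have hx : 0 < x := (uIoc_of_le hr ▸ hx).1
    rw [levyDensity_one_of_pos hx, show n - 1 - Y = n + (-1 - Y) by ring, Real.rpow_add hx,
      Real.rpow_natCast]
    ring
  rw [hcongr, intervalIntegral.integral_const_mul, integral_rpow (Or.inl (by linarith)),
    show (n : ℝ) - 1 - Y + 1 = n - Y by ring, Real.zero_rpow (sub_pos.2 hn).ne']
  ring

theorem truncatedMoment_levyDensity_one (heven : Even n) (hn : Y < n) (ht : |t| ≤ 1) :
    truncatedMoment n (levyDensity Y Cp Cm 1) t =
      (Cp * (1 - t) ^ (n - Y) + Cm * (1 + t) ^ (n - Y)) / (n - Y) := by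
  obtain ⟨htl, htr⟩ := abs_le.1 ht
  have hint := integrableOn_pow_mul_Icc_sub hn
    (measurable_levyDensity_one (Cp := Cp) (Cm := Cm)).aestronglyMeasurable
    (fun x _ => abs_levyDensity_one_le x) t
  have hle : -1 - t ≤ 1 - t := by linarith
  have hcont : ∀ a b, a ∈ Icc (-1 - t) (1 - t) → b ∈ Icc (-1 - t) (1 - t) →
      IntervalIntegrable (fun x => x ^ n * levyDensity Y Cp Cm 1 x) volume a b := fun a b ha hb =>
    ((intervalIntegrable_iff_integrableOn_Icc_of_le hle).2 hint).mono_set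
      (uIcc_of_le hle ▸ uIcc_subset_Icc ha hb)
  have hzero : (0 : ℝ) ∈ Icc (-1 - t) (1 - t) := ⟨by linarith, by linarith⟩
  have hneg : ∫ x in (-1 - t)..0, x ^ n * levyDensity Y Cp Cm 1 x =
      ∫ x in 0..(1 + t), x ^ n * levyDensity Y Cm Cp 1 x := by
    have h := intervalIntegral.integral_comp_neg (a := 0) (b := 1 + t)
      fun x => x ^ n * levyDensity Y Cp Cm 1 x
    simp only [heven.neg_pow, levyDensity_neg_one, neg_zero, neg_add'] at h
    exact h.symm
  rw [truncatedMoment, integral_Icc_eq_integral_Ioc, ← intervalIntegral.integral_of_le hle,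
    ← intervalIntegral.integral_add_adjacent_intervals
      (hcont _ 0 (left_mem_Icc.2 hle) hzero) (hcont 0 _ hzero (right_mem_Icc.2 hle)), hneg,
    intervalIntegral_pow_mul_levyDensity_one hn (by linarith),
    intervalIntegral_pow_mul_levyDensity_one hn (by linarith)]
  ring

/-- The `j`-th Taylor coefficient at `t = 0` of the `n`-th moment, `n` even, of the Lévy density
truncated to the window `|x + t| ≤ 1`. -/
def levyMomentCoeff (Y Cp Cm : ℝ) (n j : ℕ) : ℝ :=
  (Cp * (-1) ^ j + Cm) * Ring.choose (n - Y) j / (n - Y)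

theorem levyMomentCoeff_zero : levyMomentCoeff Y Cp Cm n 0 = (Cp + Cm) / (n - Y) := by
  rw [levyMomentCoeff, pow_zero, mul_one, Ring.choose_zero_right, mul_one]

theorem levyMomentCoeff_two (hn : (n : ℝ) - Y ≠ 0) :
    levyMomentCoeff Y Cp Cm n 2 = (Cp + Cm) * (n - 1 - Y) / 2 := by
  rw [levyMomentCoeff, choose_two_eq_mul_sub_one_div_two]
  field_simp
  ring

theorem isBigO_truncatedMoment_levyDensity_one_sub_sum (heven : Even n) (hn : Y < n) (m : ℕ) :
    (fun t => truncatedMoment n (levyDensity Y Cp Cm 1) t -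
      ∑ j ∈ Finset.range m, levyMomentCoeff Y Cp Cm n j * t ^ j) =O[𝓝 0] fun t => t ^ m := by
  have hplus := isBigO_one_add_rpow_sub_sum_choose (n - Y) m
  have hminus : (fun t : ℝ => (1 - t) ^ (n - Y) -
      ∑ j ∈ Finset.range m, Ring.choose (n - Y) j * (-t) ^ j) =O[𝓝 0] fun t => t ^ m := by
    have hneg : Tendsto (fun t : ℝ => -t) (𝓝 0) (𝓝 0) := by
      simpa using (continuous_neg (G := ℝ)).tendsto 0
    refine ((hplus.comp_tendsto hneg).congr_left fun t => ?_).trans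
      (IsBigO.of_bound' (Eventually.of_forall fun t => ?_))
    · simp only [Function.comp_apply, sub_eq_add_neg]
    · simp only [Function.comp_apply, norm_pow, norm_neg, le_refl]
  refine ((hminus.const_mul_left (Cp / (n - Y))).add
    (hplus.const_mul_left (Cm / (n - Y)))).congr' ?_ EventuallyEq.rfl
  filter_upwards [Metric.closedBall_mem_nhds (0 : ℝ) one_pos] with t ht
  rw [mem_closedBall_zero_iff, Real.norm_eq_abs] at ht
  rw [truncatedMoment_levyDensity_one heven hn ht, mul_sub, mul_sub, sub_add_sub_comm,
    Finset.mul_sum, Finset.mul_sum, ← Finset.sum_add_distrib]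
  congr 1
  · ring
  · refine Finset.sum_congr rfl fun j _ => ?_
    rw [levyMomentCoeff, neg_pow]
    ring

theorem exists_abs_le_mul_abs_pow_of_isBigO {f : ℝ → ℝ} {M : ℝ} {m n : ℕ}
    (hf : f =O[𝓝 0] fun t => t ^ m) (hM : ∀ t, |f t| ≤ M * (1 + |t|) ^ (n + m)) :
    ∃ C, ∀ t, |f t| ≤ C * |t| ^ m * (1 + |t|) ^ n := by
  obtain ⟨K, hK⟩ := hf.bound
  obtain ⟨δ, hδ, hball⟩ := Metric.eventually_nhds_iff.1 hK
  have hMnonneg : 0 ≤ M := by simpa using (abs_nonneg _).trans (hM 0)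
  refine ⟨|K| + M * (δ⁻¹ + 1) ^ m, fun t => ?_⟩
  rcases lt_or_ge |t| δ with ht | ht
  · calc |f t| ≤ K * |t| ^ m := by simpa using hball (by simpa using ht)
      _ ≤ (|K| + M * (δ⁻¹ + 1) ^ m) * |t| ^ m * 1 := by
          rw [mul_one]
          gcongr
          exact (le_abs_self K).trans (le_add_of_nonneg_right (by positivity))
      _ ≤ _ := by
          gcongr
          exact one_le_pow₀ (le_add_of_nonneg_right (abs_nonneg t))
  · have hone : 1 + |t| ≤ (δ⁻¹ + 1) * |t| := by
      have := (one_le_inv_mul₀ hδ).2 ht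
      linarith
    calc |f t| ≤ M * (1 + |t|) ^ (n + m) := hM t
      _ = M * (1 + |t|) ^ m * (1 + |t|) ^ n := by ring
      _ ≤ M * ((δ⁻¹ + 1) * |t|) ^ m * (1 + |t|) ^ n := by gcongr
      _ = M * (δ⁻¹ + 1) ^ m * |t| ^ m * (1 + |t|) ^ n := by rw [mul_pow]; ring
      _ ≤ _ := by
          gcongr
          exact le_add_of_nonneg_left (abs_nonneg K)

theorem one_le_one_add_abs (t : ℝ) : 1 ≤ 1 + |t| := le_add_of_nonneg_right (abs_nonneg t)

theorem abs_sum_range_mul_pow_le (a : ℕ → ℝ) (m : ℕ) (t : ℝ) :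
    |∑ j ∈ Finset.range m, a j * t ^ j| ≤ (∑ j ∈ Finset.range m, |a j|) * (1 + |t|) ^ m := by
  rw [Finset.sum_mul]
  refine (Finset.abs_sum_le_sum_abs _ _).trans (Finset.sum_le_sum fun j hj => ?_)
  rw [abs_mul, abs_pow]
  gcongr
  exact (pow_le_pow_left₀ (abs_nonneg t) (le_add_of_nonneg_left zero_le_one) j).trans
    (pow_le_pow_right₀ (one_le_one_add_abs t) (Finset.mem_range.1 hj).le)

theorem exists_abs_truncatedMoment_levyDensity_one_sub_sum_le (Cp Cm : ℝ) (heven : Even n)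
    (hY : 0 ≤ Y) (hn : Y < n) (m : ℕ) :
    ∃ C, ∀ t, |truncatedMoment n (levyDensity Y Cp Cm 1) t -
      ∑ j ∈ Finset.range m, levyMomentCoeff Y Cp Cm n j * t ^ j| ≤
        C * |t| ^ m * (1 + |t|) ^ n := by
  set L := 2 * max |Cp| |Cm| / (n - Y)
  have : 0 ≤ L := div_nonneg (by positivity) (sub_pos.2 hn).le
  refine exists_abs_le_mul_abs_pow_of_isBigO
    (isBigO_truncatedMoment_levyDensity_one_sub_sum heven hn m)
    (M := L + ∑ j ∈ Finset.range m, |levyMomentCoeff Y Cp Cm n j|) fun t => ?_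
  have hone := one_le_one_add_abs t
  refine (abs_sub _ _).trans ?_
  rw [add_mul]
  gcongr ?_ + ?_
  · refine (abs_truncatedMoment_le hn (fun x _ => abs_levyDensity_one_le x) t).trans ?_
    gcongr
    rw [← Real.rpow_natCast]
    exact Real.rpow_le_rpow_of_exponent_le hone (by push_cast; linarith [m.cast_nonneg (α := ℝ)])
  · refine (abs_sum_range_mul_pow_le _ m t).trans ?_
    gcongr
    exact Nat.le_add_left m n

end LevyMoment

/-! ### Truncated moments of the scaled stable density -/

section StableMoment

theorem truncatedMoment_add {n : ℕ} {f g : ℝ → ℝ} {t : ℝ}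
    (hf : IntegrableOn (fun x => x ^ n * f x) (Icc (-1 - t) (1 - t)))
    (hg : IntegrableOn (fun x => x ^ n * g x) (Icc (-1 - t) (1 - t))) :
    truncatedMoment n (fun x => f x + g x) t = truncatedMoment n f t + truncatedMoment n g t := by
  simp only [truncatedMoment, mul_add]
  exact integral_add hf hg

theorem truncatedMoment_const_mul (n : ℕ) (a : ℝ) (f : ℝ → ℝ) (t : ℝ) :
    truncatedMoment n (fun x => a * f x) t = a * truncatedMoment n f t := by
  simp only [truncatedMoment, mul_left_comm _ a, integral_const_mul]

section

variable {n : ℕ} {f : ℝ → ℝ} {q K t : ℝ}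

theorem abs_truncatedMoment_le_mul_pow (hq0 : 0 ≤ q) (hq : q < n)
    (hf : ∀ x ≠ 0, |f x| ≤ K * |x| ^ (-1 - q)) (t : ℝ) :
    |truncatedMoment n f t| ≤ 2 / (n - q) * K * (1 + |t|) ^ n := by
  have hK := nonneg_of_abs_le_mul_abs_rpow hf
  have : 0 ≤ 2 / (n - q) := div_nonneg zero_le_two (sub_pos.2 hq).le
  refine (abs_truncatedMoment_le hq hf t).trans ?_
  rw [← div_mul_eq_mul_div, ← Real.rpow_natCast (1 + |t|)]
  gcongr
  · exact one_le_one_add_abs t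
  · linarith

/-- When the full moment vanishes, the truncated moment is minus the moment over the complement of
the window, which avoids the singularity of the density at the origin. -/
theorem abs_truncatedMoment_le_of_integral_eq_zero (hq : n < q)
    (hf : ∀ x ≠ 0, |f x| ≤ K * |x| ^ (-1 - q)) (hint : Integrable fun x => x ^ n * f x)
    (hzero : ∫ x, x ^ n * f x = 0) (ht : |t| ≤ 1 / 2) :
    |truncatedMoment n f t| ≤ 2 * K / (q - n) * (1 / 2) ^ (n - q) := by
  obtain ⟨htl, htr⟩ := abs_le.1 ht
  have hcompl : truncatedMoment n f t = -∫ x in (Icc (-1 - t) (1 - t))ᶜ, x ^ n * f x := by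
    rw [setIntegral_compl measurableSet_Icc hint, hzero, zero_sub, neg_neg, truncatedMoment]
  rw [hcompl, abs_neg]
  refine abs_setIntegral_pow_mul_le_of_forall_lt_abs hq one_half_pos hf measurableSet_Icc.compl
    fun x hx => ?_
  by_contra! hx'
  obtain ⟨hxl, hxr⟩ := abs_le.1 hx'
  exact hx ⟨by linarith, by linarith⟩

theorem exists_abs_truncatedMoment_le_of_integral_eq_zero {p : ℝ} (hq0 : 0 ≤ q) (hq : q < n)
    (hp : n < p) :
    ∃ L, ∀ (f : ℝ → ℝ) (A B : ℝ), (∀ x ≠ 0, |f x| ≤ A * |x| ^ (-1 - q)) →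
      (∀ x ≠ 0, |f x| ≤ B * |x| ^ (-1 - p)) → (Integrable fun x => x ^ n * f x) →
      ∫ x, x ^ n * f x = 0 →
      ∀ t, |truncatedMoment n f t| ≤ L * (1 + |t|) ^ n * (B + A * t ^ 4) := by
  set L₁ := 2 / (p - n) * (1 / 2 : ℝ) ^ (n - p)
  set L₂ := 32 / (n - q)
  have hL₁ : 0 ≤ L₁ := mul_nonneg (div_nonneg zero_le_two (sub_pos.2 hp).le) (by positivity)
  have hL₂ : 0 ≤ L₂ := div_nonneg (by norm_num) (sub_pos.2 hq).le
  refine ⟨L₁ + L₂, fun f A B hA hB hint hzero t => ?_⟩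
  have hA0 := nonneg_of_abs_le_mul_abs_rpow hA
  have hB0 := nonneg_of_abs_le_mul_abs_rpow hB
  have hpow : 1 ≤ (1 + |t|) ^ n := one_le_pow₀ (one_le_one_add_abs t)
  rcases le_or_gt |t| (1 / 2) with ht | ht
  · calc |truncatedMoment n f t| ≤ 2 * B / (p - n) * (1 / 2) ^ (n - p) :=
          abs_truncatedMoment_le_of_integral_eq_zero hp hB hint hzero ht
      _ = L₁ * 1 * B := by ring
      _ ≤ (L₁ + L₂) * (1 + |t|) ^ n * (B + A * t ^ 4) := by
          gcongr
          · exact le_add_of_nonneg_right hL₂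
          · exact le_add_of_nonneg_right (by positivity)
  · have ht4 : 1 ≤ 16 * t ^ 4 := by
      have h := pow_le_pow_left₀ (by norm_num) ht.le 4
      rw [Even.pow_abs ⟨2, rfl⟩] at h
      linarith
    calc |truncatedMoment n f t| ≤ 2 / (n - q) * A * (1 + |t|) ^ n :=
          abs_truncatedMoment_le_mul_pow hq0 hq hA t
      _ ≤ 2 / (n - q) * A * (1 + |t|) ^ n * (16 * t ^ 4) := by
          have := sub_pos.2 hq
          exact le_mul_of_one_le_right (by positivity) ht4
      _ = L₂ * (1 + |t|) ^ n * (A * t ^ 4) := by ring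
      _ ≤ (L₁ + L₂) * (1 + |t|) ^ n * (B + A * t ^ 4) := by
          gcongr
          · exact le_add_of_nonneg_left hL₁
          · exact le_add_of_nonneg_left hB0

end

variable {c : ℂ} {Y : ℝ} {k : ℕ}

theorem exists_abs_truncatedMoment_two_stableTailError_le (hc : 0 < c.re) (hY1 : 1 < Y)
    (hY2 : Y < 2) :
    ∃ C, ∀ b t, 0 < b → |truncatedMoment 2 (scaledDensity b (stableTailError c Y)) t| ≤
      C * (1 + |t|) ^ 2 * (b ^ (2 * Y) + b ^ Y * t ^ 4) := by
  have hY : 0 < Y := one_pos.trans hY1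
  obtain ⟨A, hA⟩ := exists_abs_stableTailError_le_abs_rpow_neg_one_sub hc hY
  obtain ⟨B, hB⟩ := exists_abs_stableDensity_sub_levyDensity_le hc hY
  change ∀ x ≠ 0, |stableTailError c Y x| ≤ B * |x| ^ (-1 - 2 * Y) at hB
  have hA0 := nonneg_of_abs_le_mul_abs_rpow hA
  have hB0 := nonneg_of_abs_le_mul_abs_rpow hB
  obtain ⟨L, hL⟩ := exists_abs_truncatedMoment_le_of_integral_eq_zero (n := 2) (q := Y)
    (p := 2 * Y) hY.le (by push_cast; linarith) (by push_cast; linarith)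
  refine ⟨|L| * (A + B), fun b t hb => ?_⟩
  have hint : Integrable fun x => x ^ 2 * scaledDensity b (stableTailError c Y) x := by
    refine integrable_mul_scaledDensity hb (g := fun x => x ^ 2) ?_
    simpa only [mul_pow, mul_assoc] using
      (integrable_sq_mul_stableTailError hc hY1 hY2).const_mul (b ^ 2)
  have hzero : ∫ x, x ^ 2 * scaledDensity b (stableTailError c Y) x = 0 := by
    rw [integral_mul_scaledDensity hb fun x => x ^ 2]
    simp only [mul_pow, mul_assoc, integral_const_mul, integral_sq_mul_stableTailError hc hY1 hY2,
      mul_zero]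
  calc _ ≤ L * (1 + |t|) ^ 2 * (B * b ^ (2 * Y) + A * b ^ Y * t ^ 4) :=
        hL _ _ _ (abs_scaledDensity_le hb hA) (abs_scaledDensity_le hb hB) hint hzero t
    _ ≤ |L| * (1 + |t|) ^ 2 * ((A + B) * b ^ (2 * Y) + (A + B) * b ^ Y * t ^ 4) := by
        gcongr
        exacts [le_abs_self L, le_add_of_nonneg_left hA0, le_add_of_nonneg_right hB0]
    _ = _ := by ring

theorem exists_abs_truncatedMoment_stableTailError_le (hc : 0 < c.re) (hY1 : 1 < Y) (hY2 : Y < 2)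
    (hk : 1 ≤ k) :
    ∃ C, ∀ b t, 0 < b →
      |truncatedMoment (2 * k) (scaledDensity b (stableTailError c Y)) t| ≤
        C * (1 + |t|) ^ (2 * k) * (b ^ (2 * Y) + b ^ Y * t ^ 4) := by
  have hY : 0 < Y := one_pos.trans hY1
  obtain ⟨B, hB⟩ := exists_abs_stableDensity_sub_levyDensity_le hc hY
  change ∀ x ≠ 0, |stableTailError c Y x| ≤ B * |x| ^ (-1 - 2 * Y) at hB
  have hB0 := nonneg_of_abs_le_mul_abs_rpow hB
  rcases hk.eq_or_lt with rfl | hk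
  · exact exists_abs_truncatedMoment_two_stableTailError_le hc hY1 hY2
  · have h2Y : 2 * Y < (2 * k : ℕ) := by
      have : (2 : ℝ) ≤ k := by exact_mod_cast hk
      push_cast
      linarith
    refine ⟨2 / ((2 * k : ℕ) - 2 * Y) * B, fun b t hb => ?_⟩
    have := sub_pos.2 h2Y
    calc _ ≤ 2 / ((2 * k : ℕ) - 2 * Y) * (B * b ^ (2 * Y)) * (1 + |t|) ^ (2 * k) :=
          abs_truncatedMoment_le_mul_pow (by positivity) h2Y (abs_scaledDensity_le hb hB) t
      _ = 2 / ((2 * k : ℕ) - 2 * Y) * B * (1 + |t|) ^ (2 * k) * b ^ (2 * Y) := by ring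
      _ ≤ _ := by
          gcongr
          exact le_add_of_nonneg_right (by positivity)

theorem truncatedMoment_scaledDensity_stableDensity (hc : 0 < c.re) (hY : 0 < Y)
    {n : ℕ} (hn : Y < n) {b : ℝ} (hb : 0 < b) (t : ℝ) :
    truncatedMoment n (scaledDensity b (stableDensity c Y)) t =
      b ^ Y * truncatedMoment n
        (levyDensity Y (stableTail c Y) (stableTail ((starRingEnd ℂ) c) Y) 1) t +
      truncatedMoment n (scaledDensity b (stableTailError c Y)) t := by
  obtain ⟨A, hA⟩ := exists_abs_stableTailError_le_abs_rpow_neg_one_sub hc hY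
  have hmeas : Measurable (scaledDensity b (stableTailError c Y)) :=
    ((measurable_stableTailError hc hY).comp (measurable_const_mul _)).const_mul _
  rw [← truncatedMoment_const_mul, ← truncatedMoment_add
    (f := fun x => b ^ Y * levyDensity Y (stableTail c Y) (stableTail ((starRingEnd ℂ) c) Y) 1 x)
    _ (integrableOn_pow_mul_Icc_sub hn hmeas.aestronglyMeasurable (abs_scaledDensity_le hb hA) t)]
  · congr 1
    ext x
    rw [← scaledDensity_levyDensity_one hb]
    simp only [scaledDensity, stableTailError]
    ring
  · simp only [mul_left_comm _ (b ^ Y)]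
    exact (integrableOn_pow_mul_Icc_sub hn measurable_levyDensity_one.aestronglyMeasurable
      (fun x _ => abs_levyDensity_one_le x) t).const_mul _

theorem exists_abs_truncatedMoment_stableDensity_sub_sum_le (hc : 0 < c.re) (hY1 : 1 < Y)
    (hY2 : Y < 2) (hk : 1 ≤ k) :
    ∃ C, ∀ b t, 0 < b →
      |truncatedMoment (2 * k) (scaledDensity b (stableDensity c Y)) t -
        b ^ Y * ∑ j ∈ Finset.range 4, levyMomentCoeff Y (stableTail c Y)
          (stableTail ((starRingEnd ℂ) c) Y) (2 * k) j * t ^ j| ≤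
        C * (1 + |t|) ^ (2 * k) * (b ^ (2 * Y) + b ^ Y * t ^ 4) := by
  have hY : 0 < Y := one_pos.trans hY1
  have hn : Y < (2 * k : ℕ) := by
    have : (1 : ℝ) ≤ k := by exact_mod_cast hk
    push_cast
    linarith
  obtain ⟨C₁, hC₁⟩ := exists_abs_truncatedMoment_levyDensity_one_sub_sum_le (stableTail c Y)
    (stableTail ((starRingEnd ℂ) c) Y) (even_two_mul k) hY.le hn 4
  obtain ⟨C₂, hC₂⟩ := exists_abs_truncatedMoment_stableTailError_le hc hY1 hY2 hk
  refine ⟨|C₁| + C₂, fun b t hb => ?_⟩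
  rw [truncatedMoment_scaledDensity_stableDensity hc hY hn hb, add_sub_right_comm, ← mul_sub,
    add_mul, add_mul]
  refine (abs_add_le _ _).trans (add_le_add ?_ (hC₂ b t hb))
  rw [abs_mul, abs_of_pos (Real.rpow_pos_of_pos hb Y)]
  calc _ ≤ b ^ Y * (|C₁| * |t| ^ 4 * (1 + |t|) ^ (2 * k)) := by
        gcongr
        exact (hC₁ t).trans (by gcongr; exact le_abs_self C₁)
    _ = |C₁| * (1 + |t|) ^ (2 * k) * (b ^ Y * t ^ 4) := by
        rw [Even.pow_abs ⟨2, rfl⟩]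
        ring
    _ ≤ _ := by
        gcongr
        exact le_add_of_nonneg_left (by positivity)

end StableMoment

/-! ### Randomizing the window -/

section RandomWindow

theorem abs_pow_mul_indicator_abs_le_one_le (n : ℕ) (x t : ℝ) :
    |x ^ n * {x : ℝ | |x| ≤ 1}.indicator (fun _ => 1) (x + t)| ≤ (1 + |t|) ^ n := by
  by_cases h : x + t ∈ {x : ℝ | |x| ≤ 1}
  · rw [indicator_of_mem h, mul_one, abs_pow]
    gcongr
    calc |x| = |x + t - t| := by rw [add_sub_cancel_right]
      _ ≤ |x + t| + |t| := abs_sub _ _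
      _ ≤ 1 + |t| := by gcongr; exact h
  · rw [indicator_of_notMem h, mul_zero, abs_zero]
    positivity

theorem integral_withDensity_ofReal {α : Type*} [MeasurableSpace α] {ν : Measure α} {p : α → ℝ}
    (hp : AEMeasurable p ν) (hnonneg : 0 ≤ᵐ[ν] p) (g : α → ℝ) :
    ∫ x, g x ∂ν.withDensity (fun x => ENNReal.ofReal (p x)) = ∫ x, g x * p x ∂ν := by
  rw [integral_withDensity_eq_integral_toReal_smul₀ hp.ennreal_ofReal
    (Eventually.of_forall fun _ => ENNReal.ofReal_lt_top)]
  refine integral_congr_ae ?_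
  filter_upwards [hnonneg] with x hx
  rw [ENNReal.toReal_ofReal hx, smul_eq_mul, mul_comm]

variable {Ω : Type*} [MeasurableSpace Ω] {P : Measure Ω}

theorem integrable_one_add_abs_pow [IsFiniteMeasure P] {T : Ω → ℝ} {n : ℕ} (hT : MemLp T n P) :
    Integrable (fun ω => (1 + |T ω|) ^ n) P := by
  refine ((memLp_const (1 : ℝ)).add hT.norm).integrable_norm_pow'.congr
    (Eventually.of_forall fun ω => ?_)
  simp [abs_of_nonneg (add_nonneg zero_le_one (abs_nonneg (T ω)))]

theorem integral_pow_mul_indicator_eq_integral_truncatedMoment [IsFiniteMeasure P] {X T : Ω → ℝ}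
    {n : ℕ} {p : ℝ → ℝ} {b : ℝ} (hX : AEMeasurable X P) (hT : MemLp T n P) (hTX : IndepFun T X P)
    (hp : AEMeasurable p) (hnonneg : 0 ≤ᵐ[volume] p)
    (hlaw : P.map X = volume.withDensity fun x => ENNReal.ofReal (p x)) (hb : 0 < b) :
    Integrable (fun ω => truncatedMoment n (scaledDensity b p) (T ω)) P ∧
      ∫ ω, (b * X ω) ^ n * {x : ℝ | |x| ≤ 1}.indicator (fun _ => 1) (b * X ω + T ω) ∂P =
        ∫ ω, truncatedMoment n (scaledDensity b p) (T ω) ∂P := by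
  have hTm : AEMeasurable T P := hT.aestronglyMeasurable.aemeasurable
  have hind : Measurable ({x : ℝ | |x| ≤ 1}.indicator fun _ => (1 : ℝ)) :=
    measurable_const.indicator (measurableSet_le measurable_norm measurable_const)
  let F : ℝ × ℝ → ℝ := fun z =>
    (b * z.2) ^ n * {x : ℝ | |x| ≤ 1}.indicator (fun _ => 1) (b * z.2 + z.1)
  have hF : Measurable F := by fun_prop
  have hinner : ∀ t, ∫ x, F (t, x) ∂P.map X = truncatedMoment n (scaledDensity b p) t := fun t => by
    rw [hlaw, integral_withDensity_ofReal hp hnonneg, truncatedMoment_scaledDensity hb]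
  have hFint : Integrable F ((P.map T).prod (P.map X)) := by
    have hbound : Integrable (fun t : ℝ => (1 + |t|) ^ n) (P.map T) :=
      (integrable_map_measure (by fun_prop) hTm).2 (integrable_one_add_abs_pow hT)
    exact (hbound.comp_fst _).mono' hF.aestronglyMeasurable
      (Eventually.of_forall fun z => abs_pow_mul_indicator_abs_le_one_le n _ _)
  have houter := hFint.integral_prod_left
  simp only [hinner] at houter
  refine ⟨(integrable_map_measure houter.aestronglyMeasurable hTm).1 houter, ?_⟩
  calc _ = ∫ z, F z ∂P.map (fun ω => (T ω, X ω)) :=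
        (integral_map (hTm.prodMk hX) hF.aestronglyMeasurable).symm
    _ = ∫ t, truncatedMoment n (scaledDensity b p) t ∂P.map T := by
        rw [(indepFun_iff_map_prod_eq_prod_map_map hTm hX).1 hTX, integral_prod _ hFint]
        simp only [hinner]
    _ = _ := integral_map hTm houter.aestronglyMeasurable

variable [IsProbabilityMeasure P] {W : Ω → ℝ}

theorem integrable_pow_of_memLp {m n : ℕ} (hW : MemLp W n P) (hmn : m ≤ n) :
    Integrable (fun ω => W ω ^ m) P := by
  have h := (hW.mono_exponent (p := m) (by exact_mod_cast hmn)).integrable_norm_pow'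
  exact h.mono (hW.aestronglyMeasurable.pow m) (by simp)

theorem integral_sum_range_four_mul_affine_pow (hW : MemLp W 3 P) (hW1 : ∫ ω, W ω ∂P = 0)
    (hW2 : ∫ ω, W ω ^ 2 ∂P = 1) (hW3 : ∫ ω, W ω ^ 3 ∂P = 0) (a : ℕ → ℝ) (τ ρ : ℝ) :
    Integrable (fun ω => ∑ j ∈ Finset.range 4, a j * (τ * W ω + ρ) ^ j) P ∧
      ∫ ω, ∑ j ∈ Finset.range 4, a j * (τ * W ω + ρ) ^ j ∂P =
        a 0 + a 1 * ρ + a 2 * (τ ^ 2 + ρ ^ 2) + a 3 * (ρ ^ 3 + 3 * ρ * τ ^ 2) := by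
  have hexpand : ∀ ω, ∑ j ∈ Finset.range 4, a j * (τ * W ω + ρ) ^ j =
      (∑ j ∈ Finset.range 4, a j * ρ ^ j) + (a 1 + 2 * a 2 * ρ + 3 * a 3 * ρ ^ 2) * τ * W ω +
        (a 2 + 3 * a 3 * ρ) * τ ^ 2 * W ω ^ 2 + a 3 * τ ^ 3 * W ω ^ 3 := fun ω => by
    simp only [Finset.sum_range_succ, Finset.sum_range_zero]
    ring
  have hint : ∀ j ≤ 3, ∀ d : ℝ, Integrable (fun ω => d * W ω ^ j) P := fun j hj d =>
    (integrable_pow_of_memLp (n := 3) (by exact_mod_cast hW) hj).const_mul d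
  have hint1 : ∀ d : ℝ, Integrable (fun ω => d * W ω) P := by
    simpa only [pow_one] using hint 1 (by norm_num)
  have h01 := (integrable_const (μ := P) (∑ j ∈ Finset.range 4, a j * ρ ^ j)).fun_add
    (hint1 ((a 1 + 2 * a 2 * ρ + 3 * a 3 * ρ ^ 2) * τ))
  have h012 := h01.fun_add (hint 2 (by norm_num) ((a 2 + 3 * a 3 * ρ) * τ ^ 2))
  have h3 := hint 3 le_rfl (a 3 * τ ^ 3)
  simp only [hexpand]
  refine ⟨h012.fun_add h3, ?_⟩
  rw [integral_add h012 h3, integral_add h01 (hint 2 (by norm_num) _),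
    integral_add (integrable_const _) (hint1 _)]
  simp only [integral_const_mul, hW1, hW2, hW3, integral_const, probReal_univ, one_smul,
    Finset.sum_range_succ, Finset.sum_range_zero]
  ring

theorem affine_pow_four_le {τ ρ Λ : ℝ} (hρ : |ρ| ≤ Λ) (w : ℝ) :
    (τ * w + ρ) ^ 4 ≤ 8 * (1 + Λ) ^ 3 * (τ ^ 4 + |ρ|) * (1 + |w|) ^ 4 := by
  have hΛ : 0 ≤ Λ := (abs_nonneg ρ).trans hρ
  have hw := one_le_one_add_abs w
  have hρ4 : ρ ^ 4 ≤ (1 + Λ) ^ 3 * |ρ| * (1 + |w|) ^ 4 := by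
    calc ρ ^ 4 = |ρ| ^ 3 * |ρ| := by rw [← pow_succ, Even.pow_abs ⟨2, rfl⟩]
      _ ≤ (1 + Λ) ^ 3 * |ρ| * 1 := by rw [mul_one]; gcongr; linarith
      _ ≤ _ := by gcongr; exact one_le_pow₀ hw
  have hτ4 : (τ * w) ^ 4 ≤ (1 + Λ) ^ 3 * τ ^ 4 * (1 + |w|) ^ 4 := by
    calc (τ * w) ^ 4 = 1 * τ ^ 4 * |w| ^ 4 := by rw [mul_pow, one_mul, Even.pow_abs ⟨2, rfl⟩]
      _ ≤ _ := by
        gcongr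
        exacts [one_le_pow₀ (le_add_of_nonneg_right hΛ), le_add_of_nonneg_left zero_le_one]
  calc (τ * w + ρ) ^ 4 ≤ 2 ^ 3 * ((τ * w) ^ 4 + ρ ^ 4) :=
        Even.add_pow_le ⟨2, rfl⟩
    _ ≤ _ := by linarith

theorem one_add_abs_affine_le {τ ρ Λ : ℝ} (hτ : |τ| ≤ Λ) (hρ : |ρ| ≤ Λ) (w : ℝ) :
    1 + |τ * w + ρ| ≤ (1 + Λ) * (1 + |w|) := by
  have h : |τ * w + ρ| ≤ Λ * |w| + Λ := by
    refine (abs_add_le _ _).trans ?_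
    rw [abs_mul]
    gcongr
  linarith [abs_nonneg w]

theorem abs_integral_sum_range_four_mul_affine_pow_sub_le (hW : MemLp W 3 P)
    (hW1 : ∫ ω, W ω ∂P = 0) (hW2 : ∫ ω, W ω ^ 2 ∂P = 1) (hW3 : ∫ ω, W ω ^ 3 ∂P = 0)
    (a : ℕ → ℝ) {τ ρ Λ : ℝ} (hτ : |τ| ≤ Λ) (hρ : |ρ| ≤ Λ) :
    |∫ ω, ∑ j ∈ Finset.range 4, a j * (τ * W ω + ρ) ^ j ∂P - (a 0 + a 2 * τ ^ 2)| ≤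
      (|a 1| + |a 2| * Λ + |a 3| * (4 * Λ ^ 2)) * |ρ| := by
  have hcube : |ρ ^ 2 + 3 * τ ^ 2| ≤ 4 * Λ ^ 2 := by
    rw [abs_of_nonneg (by positivity), ← sq_abs ρ, ← sq_abs τ]
    have hρ2 : |ρ| ^ 2 ≤ Λ ^ 2 := by gcongr
    have hτ2 : |τ| ^ 2 ≤ Λ ^ 2 := by gcongr
    linarith
  rw [(integral_sum_range_four_mul_affine_pow hW hW1 hW2 hW3 a τ ρ).2]
  calc _ = |a 1 + a 2 * ρ + a 3 * (ρ ^ 2 + 3 * τ ^ 2)| * |ρ| := by rw [← abs_mul]; ring_nf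
    _ ≤ _ := by
      gcongr
      refine (abs_add_three _ _ _).trans ?_
      rw [abs_mul, abs_mul]
      gcongr

theorem one_add_abs_affine_pow_mul_le {τ ρ Λ A B : ℝ} (hA : 0 ≤ A) (hB : 0 ≤ B) (hτ : |τ| ≤ Λ)
    (hρ : |ρ| ≤ Λ) (n : ℕ) (w : ℝ) :
    (1 + |τ * w + ρ|) ^ n * (A + B * (τ * w + ρ) ^ 4) ≤
      8 * (1 + Λ) ^ (n + 3) * (A + B * (τ ^ 4 + |ρ|)) * (1 + |w|) ^ (n + 4) := by
  have hΛ : 0 ≤ Λ := (abs_nonneg ρ).trans hρ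
  have hconst : 1 ≤ 8 * (1 + Λ) ^ 3 * (1 + |w|) ^ 4 := by
    have h₁ : 1 ≤ (1 + Λ) ^ 3 := one_le_pow₀ (le_add_of_nonneg_right hΛ)
    have h₂ : 1 ≤ (1 + |w|) ^ 4 := one_le_pow₀ (one_le_one_add_abs w)
    exact one_le_mul_of_one_le_of_one_le (by linarith) h₂
  calc _ ≤ ((1 + Λ) * (1 + |w|)) ^ n * (A * (8 * (1 + Λ) ^ 3 * (1 + |w|) ^ 4) +
        B * (8 * (1 + Λ) ^ 3 * (τ ^ 4 + |ρ|) * (1 + |w|) ^ 4)) := by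
        gcongr
        exacts [one_add_abs_affine_le hτ hρ w, le_mul_of_one_le_right hA hconst,
          affine_pow_four_le hρ w]
    _ = _ := by rw [mul_pow]; ring

theorem abs_integral_comp_affine_sub_le {M : ℝ → ℝ} {a : ℕ → ℝ} {n : ℕ} {A B C τ ρ Λ : ℝ}
    (hA : 0 ≤ A) (hB : 0 ≤ B) (hC : 0 ≤ C)
    (hM : ∀ t, |M t - B * ∑ j ∈ Finset.range 4, a j * t ^ j| ≤
      C * (1 + |t|) ^ n * (A + B * t ^ 4))
    (hW : MemLp W (n + 4 : ℕ) P) (hW1 : ∫ ω, W ω ∂P = 0) (hW2 : ∫ ω, W ω ^ 2 ∂P = 1)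
    (hW3 : ∫ ω, W ω ^ 3 ∂P = 0) (hint : Integrable (fun ω => M (τ * W ω + ρ)) P)
    (hτ : |τ| ≤ Λ) (hρ : |ρ| ≤ Λ) :
    |∫ ω, M (τ * W ω + ρ) ∂P - B * (a 0 + a 2 * τ ^ 2)| ≤
      C * (8 * (1 + Λ) ^ (n + 3) * (A + B * (τ ^ 4 + |ρ|))) * ∫ ω, (1 + |W ω|) ^ (n + 4) ∂P +
        B * ((|a 1| + |a 2| * Λ + |a 3| * (4 * Λ ^ 2)) * |ρ|) := by
  have hWcube : MemLp W 3 P := hW.mono_exponent (by norm_cast; omega)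
  have hremainder : |∫ ω, M (τ * W ω + ρ) ∂P -
      B * ∫ ω, ∑ j ∈ Finset.range 4, a j * (τ * W ω + ρ) ^ j ∂P| ≤
      C * (8 * (1 + Λ) ^ (n + 3) * (A + B * (τ ^ 4 + |ρ|))) * ∫ ω, (1 + |W ω|) ^ (n + 4) ∂P := by
    rw [← Real.norm_eq_abs, ← integral_const_mul, ← integral_const_mul, ← integral_sub hint
      ((integral_sum_range_four_mul_affine_pow hWcube hW1 hW2 hW3 a τ ρ).1.const_mul B)]
    refine norm_integral_le_of_norm_le ((integrable_one_add_abs_pow hW).const_mul _)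
      (Eventually.of_forall fun ω => ?_)
    refine (hM _).trans ?_
    rw [mul_assoc, mul_assoc]
    exact mul_le_mul_of_nonneg_left (one_add_abs_affine_pow_mul_le hA hB hτ hρ n (W ω)) hC
  refine (abs_sub_le _ _ _).trans (add_le_add hremainder ?_)
  rw [← mul_sub, abs_mul, abs_of_nonneg hB]
  gcongr
  exact abs_integral_sum_range_four_mul_affine_pow_sub_le hWcube hW1 hW2 hW3 a hτ hρ

theorem exists_abs_integral_pow_mul_indicator_sub_le {c : ℂ} {Y : ℝ} {k : ℕ} {S : Ω → ℝ}
    (hc : 0 < c.re) (hY1 : 1 < Y) (hY2 : Y < 2) (hk : 1 ≤ k) (hS : AEMeasurable S P)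
    (hScf : ∀ u, charFun (P.map S) u = stableCharFun c Y u)
    (hW : MemLp W (2 * k + 4 : ℕ) P) (hW1 : ∫ ω, W ω ∂P = 0) (hW2 : ∫ ω, W ω ^ 2 ∂P = 1)
    (hW3 : ∫ ω, W ω ^ 3 ∂P = 0) (hWS : IndepFun W S P) (Λ : ℝ) :
    ∃ C, ∀ b τ ρ : ℝ, 0 < b → |τ| ≤ Λ → |ρ| ≤ Λ →
      |∫ ω, (b * S ω) ^ (2 * k) *
          {x : ℝ | |x| ≤ 1}.indicator (fun _ => 1) (b * S ω + (τ * W ω + ρ)) ∂P -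
        b ^ Y * (levyMomentCoeff Y (stableTail c Y) (stableTail ((starRingEnd ℂ) c) Y) (2 * k) 0 +
          levyMomentCoeff Y (stableTail c Y) (stableTail ((starRingEnd ℂ) c) Y) (2 * k) 2 *
            τ ^ 2)| ≤
        C * (b ^ (2 * Y) + b ^ Y * (τ ^ 4 + |ρ|)) := by
  have hY : 0 < Y := one_pos.trans hY1
  obtain ⟨hnonneg, hlaw⟩ := eq_withDensity_stableDensity_of_charFun hc hY hScf
  obtain ⟨C, hC⟩ := exists_abs_truncatedMoment_stableDensity_sub_sum_le hc hY1 hY2 hk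
  set a := levyMomentCoeff Y (stableTail c Y) (stableTail ((starRingEnd ℂ) c) Y) (2 * k)
  set K := |C| * (8 * (1 + Λ) ^ (2 * k + 3)) * ∫ ω, (1 + |W ω|) ^ (2 * k + 4) ∂P with hK
  set D := |a 1| + |a 2| * Λ + |a 3| * (4 * Λ ^ 2)
  refine ⟨K + D, fun b τ ρ hb hτ hρ => ?_⟩
  have hΛ : 0 ≤ Λ := (abs_nonneg ρ).trans hρ
  have hbY : 0 ≤ b ^ Y := Real.rpow_nonneg hb.le Y
  have hb2Y : 0 ≤ b ^ (2 * Y) := Real.rpow_nonneg hb.le (2 * Y)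
  have hT : MemLp (fun ω => τ * W ω + ρ) (2 * k : ℕ) P :=
    ((hW.mono_exponent (by norm_cast; omega)).const_mul τ).add (memLp_const ρ)
  obtain ⟨hint, heq⟩ := integral_pow_mul_indicator_eq_integral_truncatedMoment hS hT
    (hWS.comp (φ := fun w => τ * w + ρ) (by fun_prop) measurable_id)
    (continuous_stableDensity hc hY).aemeasurable hnonneg hlaw hb
  have hM : ∀ t, |truncatedMoment (2 * k) (scaledDensity b (stableDensity c Y)) t -
      b ^ Y * ∑ j ∈ Finset.range 4, a j * t ^ j| ≤
      |C| * (1 + |t|) ^ (2 * k) * (b ^ (2 * Y) + b ^ Y * t ^ 4) := fun t =>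
    (hC b t hb).trans (by gcongr; exact le_abs_self C)
  rw [heq]
  calc _ ≤ K * (b ^ (2 * Y) + b ^ Y * (τ ^ 4 + |ρ|)) + D * (b ^ Y * |ρ|) := by
        refine (abs_integral_comp_affine_sub_le hb2Y hbY (abs_nonneg C) hM hW hW1 hW2 hW3 hint
          hτ hρ).trans_eq ?_
        rw [hK]
        ring
    _ ≤ (K + D) * (b ^ (2 * Y) + b ^ Y * (τ ^ 4 + |ρ|)) := by
        rw [add_mul K D]
        have : 0 ≤ D := by positivity
        have hτ4 : b ^ Y * |ρ| ≤ b ^ (2 * Y) + b ^ Y * (τ ^ 4 + |ρ|) := by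
          rw [mul_add, ← add_assoc]
          exact le_add_of_nonneg_left (by positivity)
        gcongr

end RandomWindow

/-! ### Rescaling by the truncation level -/

section Rescaling

variable {Y h ε : ℝ}

theorem rpow_one_div_div_rpow_mul (hY : Y ≠ 0) (hh : 0 < h) (hε : 0 < ε) (m : ℕ) :
    (h ^ (1 / Y) / ε) ^ (m * Y) = h ^ m * ε ^ (-(m * Y)) := by
  rw [Real.div_rpow (by positivity) hε.le, ← Real.rpow_mul hh.le, one_div_mul_eq_div,
    mul_div_cancel_right₀ _ hY, Real.rpow_natCast, Real.rpow_neg hε.le, div_eq_mul_inv]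

theorem mul_indicator_abs_le_eq_pow_mul (hε : 0 < ε) (n : ℕ) (x y : ℝ) :
    x ^ n * {x : ℝ | |x| ≤ ε}.indicator (fun _ => 1) y =
      ε ^ n * ((x / ε) ^ n * {x : ℝ | |x| ≤ 1}.indicator (fun _ => 1) (y / ε)) := by
  have hmem : y ∈ {x : ℝ | |x| ≤ ε} ↔ y / ε ∈ {x : ℝ | |x| ≤ 1} := by
    rw [mem_ofPred_eq, mem_ofPred_eq, abs_div, abs_of_pos hε, div_le_one hε]
  rw [div_pow, ← mul_assoc, mul_div_cancel₀ _ (pow_pos hε n).ne']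
  by_cases hy : y ∈ {x : ℝ | |x| ≤ ε}
  · rw [indicator_of_mem hy, indicator_of_mem (hmem.1 hy)]
  · rw [indicator_of_notMem hy, indicator_of_notMem (mt hmem.2 hy)]

theorem integral_pow_mul_indicator_abs_le_eq_pow_mul {Ω : Type*} [MeasurableSpace Ω]
    (hε : 0 < ε) (P : Measure Ω) (S W : Ω → ℝ) (n : ℕ) (b σ r ρ : ℝ) :
    ∫ ω, (b * S ω) ^ n * {x : ℝ | |x| ≤ ε}.indicator (fun _ => 1)
        (σ * (r * W ω) + b * S ω + ρ) ∂P =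
      ε ^ n * ∫ ω, (b / ε * S ω) ^ n * {x : ℝ | |x| ≤ 1}.indicator (fun _ => 1)
        (b / ε * S ω + (σ * r / ε * W ω + ρ / ε)) ∂P := by
  rw [← integral_const_mul]
  refine congrArg (integral P) (funext fun ω => ?_)
  have harg : (σ * (r * W ω) + b * S ω + ρ) / ε =
      b / ε * S ω + (σ * r / ε * W ω + ρ / ε) := by ring
  rw [mul_indicator_abs_le_eq_pow_mul hε, harg, mul_div_right_comm]

theorem pow_mul_scaled_main_term (hY : Y ≠ 0) (hh : 0 < h) (hε : 0 < ε) (k : ℕ) (σ a₀ a₂ : ℝ) :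
    ε ^ (2 * k) * ((h ^ (1 / Y) / ε) ^ Y * (a₀ + a₂ * (σ * √h / ε) ^ 2)) =
      a₀ * h * ε ^ (2 * (k : ℝ) - Y) + σ ^ 2 * a₂ * h ^ 2 * ε ^ (2 * (k : ℝ) - Y - 2) := by
  have hb := rpow_one_div_div_rpow_mul hY hh hε 1
  rw [Nat.cast_one, one_mul, pow_one] at hb
  have h₀ : ε ^ (2 * (k : ℝ) - Y) = ε ^ (2 * k) * ε ^ (-Y) := by
    rw [sub_eq_add_neg, Real.rpow_add hε]
    norm_cast
  have h₂ : ε ^ (2 * (k : ℝ) - Y - 2) = ε ^ (2 * (k : ℝ) - Y) / ε ^ 2 := by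
    rw [Real.rpow_sub hε, Real.rpow_two]
  rw [hb, h₂, h₀, div_pow, mul_pow, Real.sq_sqrt hh.le]
  field_simp

theorem pow_mul_scaled_error_term (hY : Y ≠ 0) (hh : 0 < h) (hε : 0 < ε) (k : ℕ) (σ γ₀ : ℝ) :
    ε ^ (2 * k) * ((h ^ (1 / Y) / ε) ^ (2 * Y) +
        (h ^ (1 / Y) / ε) ^ Y * ((σ * √h / ε) ^ 4 + |h * γ₀ / ε|)) =
      σ ^ 4 * (h ^ 3 * ε ^ (2 * (k : ℝ) - 4 - Y)) +
        (1 + |γ₀| * ε ^ (Y - 1)) * (h ^ 2 * ε ^ (2 * (k : ℝ) - 2 * Y)) := by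
  have hb := rpow_one_div_div_rpow_mul hY hh hε 1
  have hb2 := rpow_one_div_div_rpow_mul hY hh hε 2
  rw [Nat.cast_one, one_mul, pow_one] at hb
  rw [Nat.cast_ofNat] at hb2
  have h₁ : ε ^ (2 * (k : ℝ) - 4 - Y) = ε ^ (2 * k) * ε ^ (-Y) / ε ^ 4 := by
    rw [sub_right_comm, sub_eq_add_neg (2 * (k : ℝ)), Real.rpow_sub hε, Real.rpow_add hε]
    norm_cast
  have h₂ : ε ^ (2 * (k : ℝ) - 2 * Y) = ε ^ (2 * k) * ε ^ (-(2 * Y)) := by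
    rw [sub_eq_add_neg, Real.rpow_add hε]
    norm_cast
  have h₃ : ε ^ (Y - 1) * ε ^ (-(2 * Y)) = ε ^ (-Y) / ε := by
    rw [← Real.rpow_add hε, ← Real.rpow_sub_one hε.ne']
    ring_nf
  have hsqrt : √h ^ 4 = h ^ 2 := by
    rw [show 4 = 2 * 2 from rfl, pow_mul, Real.sq_sqrt hh.le]
  rw [hb, hb2, h₁, h₂, abs_div, abs_mul, abs_of_pos hh, abs_of_pos hε, div_pow, mul_pow, hsqrt]
  linear_combination (-(|γ₀| * h ^ 2 * ε ^ (2 * k))) * h₃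

end Rescaling

theorem exists_add_eq_isBigO_of_isBigO_add {α : Type*} {l : Filter α} {f a b : α → ℝ}
    (hf : f =O[l] fun x => ‖a x‖ + ‖b x‖) :
    ∃ f₁ f₂ : α → ℝ, f = f₁ + f₂ ∧ f₁ =O[l] a ∧ f₂ =O[l] b := by
  obtain ⟨C, hC, hbound⟩ := hf.exists_nonneg
  refine ⟨{x | ‖b x‖ ≤ ‖a x‖}.indicator f, {x | ‖b x‖ ≤ ‖a x‖}ᶜ.indicator f,
    (indicator_self_add_compl _ f).symm, IsBigO.of_bound (C * 2) ?_, IsBigO.of_bound (C * 2) ?_⟩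
  all_goals
    filter_upwards [hbound.bound] with x hx
    rw [Real.norm_of_nonneg (add_nonneg (norm_nonneg (a x)) (norm_nonneg (b x)))] at hx
    rw [norm_indicator_eq_indicator_norm, mul_assoc, two_mul]
    refine indicator_apply_le' (f := fun x => ‖f x‖) (fun hmem => hx.trans ?_)
      fun _ => mul_nonneg hC (by positivity)
    gcongr
  · exact hmem
  · exact le_of_not_ge hmem

section Asymptotics

variable {Ω : Type*} [MeasurableSpace Ω] {P : Measure Ω}
  {Y Cp Cm : ℝ} {S W : Ω → ℝ} {k : ℕ} {ε : ℝ → ℝ}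

theorem charFun_map_eq_stableCharFun (hY1 : 1 < Y) (hY2 : Y < 2) (hC : 0 < Cp + Cm)
    (hS : AEMeasurable S P)
    (hScf : ∀ u : ℝ, ∫ ω, Complex.exp (Complex.I * u * S ω) ∂P = stableCF Y Cp Cm u) (u : ℝ) :
    charFun (P.map S) u = stableCharFun (stablePart Y Cp Cm 1) Y u := by
  rw [← stableCF_eq_stableCharFun hY1 hY2 hC, ← hScf, charFun_apply_real,
    integral_map hS (by fun_prop)]
  exact integral_congr_ae (Eventually.of_forall fun ω => by ring_nf)

theorem eventually_abs_mul_sqrt_div_le_and_abs_mul_div_le (σ γ₀ : ℝ)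
    (hεpos : ∀ᶠ h in 𝓝[>] 0, 0 < ε h) (hεsqrt : Real.sqrt =O[𝓝[>] 0] ε) :
    ∃ Λ, ∀ᶠ h in 𝓝[>] 0, |σ * √h / ε h| ≤ Λ ∧ |h * γ₀ / ε h| ≤ Λ := by
  obtain ⟨K, hK⟩ := hεsqrt.bound
  refine ⟨|K| * (|σ| + |γ₀|), ?_⟩
  filter_upwards [hεpos, hK, Ioo_mem_nhdsGT one_pos] with h hε hK ⟨hh, hh1⟩
  have hratio : √h / ε h ≤ |K| := by
    rw [div_le_iff₀ hε]
    rw [Real.norm_of_nonneg (Real.sqrt_nonneg h), Real.norm_of_nonneg hε.le] at hK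
    exact hK.trans (by gcongr; exact le_abs_self K)
  have hsqrt1 : √h ≤ 1 := Real.sqrt_le_one.2 hh1.le
  constructor
  · calc |σ * √h / ε h| = √h / ε h * |σ| := by
          rw [abs_div, abs_mul, abs_of_nonneg (Real.sqrt_nonneg h), abs_of_pos hε]
          ring
      _ ≤ |K| * (|σ| + |γ₀|) := by gcongr; exact le_add_of_nonneg_right (abs_nonneg _)
  · calc |h * γ₀ / ε h| = √h / ε h * (√h * |γ₀|) := by
          rw [abs_div, abs_mul, abs_of_pos hh, abs_of_pos hε]
          nth_rw 1 [← Real.mul_self_sqrt hh.le]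
          ring
      _ ≤ |K| * (|σ| + |γ₀|) := by
          gcongr
          exact (mul_le_of_le_one_left (abs_nonneg _) hsqrt1).trans
            (le_add_of_nonneg_left (abs_nonneg _))

variable [IsProbabilityMeasure P]

theorem exists_abs_integral_pow_mul_indicator_le_sub_le (σ γ₀ : ℝ) (hY1 : 1 < Y) (hY2 : Y < 2)
    (hC : 0 < Cp + Cm) (hk : 1 ≤ k) (hS : AEMeasurable S P)
    (hScf : ∀ u : ℝ, ∫ ω, Complex.exp (Complex.I * u * S ω) ∂P = stableCF Y Cp Cm u)
    (hW : MemLp W (2 * k + 4 : ℕ) P) (hW1 : ∫ ω, W ω ∂P = 0) (hW2 : ∫ ω, W ω ^ 2 ∂P = 1)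
    (hW3 : ∫ ω, W ω ^ 3 ∂P = 0) (hWS : IndepFun W S P) (Λ : ℝ) :
    ∃ M, ∀ h ε : ℝ, 0 < h → 0 < ε → |σ * √h / ε| ≤ Λ → |h * γ₀ / ε| ≤ Λ →
      |(∫ ω, (h ^ (1 / Y) * S ω) ^ (2 * k) * {x : ℝ | |x| ≤ ε}.indicator (fun _ => 1)
          (σ * (√h * W ω) + h ^ (1 / Y) * S ω + h * γ₀) ∂P) -
        ((Cp + Cm) / (2 * k - Y) * h * ε ^ (2 * (k : ℝ) - Y) +
          σ ^ 2 * (Cp + Cm) * (2 * k - 1 - Y) / 2 * h ^ 2 * ε ^ (2 * (k : ℝ) - Y - 2))| ≤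
      M * (σ ^ 4 * (h ^ 3 * ε ^ (2 * (k : ℝ) - 4 - Y)) +
        (1 + |γ₀| * ε ^ (Y - 1)) * (h ^ 2 * ε ^ (2 * (k : ℝ) - 2 * Y))) := by
  have hY : Y ≠ 0 := by linarith
  have hn : ((2 * k : ℕ) : ℝ) - Y ≠ 0 := by
    have : (1 : ℝ) ≤ k := by exact_mod_cast hk
    push_cast
    linarith
  obtain ⟨M, hM⟩ := exists_abs_integral_pow_mul_indicator_sub_le
    (re_stablePart_one_pos hY1 hY2 hC) hY1 hY2 hk hS
    (charFun_map_eq_stableCharFun hY1 hY2 hC hS hScf) hW hW1 hW2 hW3 hWS Λ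
  rw [conj_stablePart_one hY1 hY2 hC, stableTail_stablePart_one hY1 hY2 hC,
    stableTail_stablePart_one hY1 hY2 (add_comm Cp Cm ▸ hC), levyMomentCoeff_zero,
    levyMomentCoeff_two hn, Nat.cast_mul, Nat.cast_ofNat] at hM
  refine ⟨M, fun h ε hh hε hτ hρ => ?_⟩
  rw [integral_pow_mul_indicator_abs_le_eq_pow_mul hε, mul_div_assoc (σ ^ 2 * _),
    mul_assoc (σ ^ 2), ← mul_div_assoc, ← pow_mul_scaled_main_term hY hh hε, ← mul_sub,
    abs_mul, abs_of_pos (pow_pos hε _), ← pow_mul_scaled_error_term hY hh hε, mul_left_comm M]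
  gcongr
  exact hM _ _ _ (by positivity) hτ hρ

theorem isBigO_integral_pow_mul_indicator_sub (σ γ₀ : ℝ) (hY1 : 1 < Y) (hY2 : Y < 2)
    (hC : 0 < Cp + Cm) (hk : 1 ≤ k) (hS : AEMeasurable S P)
    (hScf : ∀ u : ℝ, ∫ ω, Complex.exp (Complex.I * u * S ω) ∂P = stableCF Y Cp Cm u)
    (hW : MemLp W (2 * k + 4 : ℕ) P) (hW1 : ∫ ω, W ω ∂P = 0) (hW2 : ∫ ω, W ω ^ 2 ∂P = 1)
    (hW3 : ∫ ω, W ω ^ 3 ∂P = 0) (hWS : IndepFun W S P)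
    (hεpos : ∀ᶠ h in 𝓝[>] 0, 0 < ε h) (hε1 : ε =O[𝓝[>] 0] fun _ => (1 : ℝ))
    (hεsqrt : Real.sqrt =O[𝓝[>] 0] ε) :
    (fun h => (∫ ω, (h ^ (1 / Y) * S ω) ^ (2 * k) * {x : ℝ | |x| ≤ ε h}.indicator (fun _ => 1)
        (σ * (√h * W ω) + h ^ (1 / Y) * S ω + h * γ₀) ∂P) -
      ((Cp + Cm) / (2 * k - Y) * h * ε h ^ (2 * (k : ℝ) - Y) +
        σ ^ 2 * (Cp + Cm) * (2 * k - 1 - Y) / 2 * h ^ 2 * ε h ^ (2 * (k : ℝ) - Y - 2)))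
      =O[𝓝[>] 0] fun h => ‖h ^ 3 * ε h ^ (2 * (k : ℝ) - 4 - Y)‖ +
        ‖h ^ 2 * ε h ^ (2 * (k : ℝ) - 2 * Y)‖ := by
  obtain ⟨Λ, hΛ⟩ := eventually_abs_mul_sqrt_div_le_and_abs_mul_div_le σ γ₀ hεpos hεsqrt
  obtain ⟨M, hM⟩ := exists_abs_integral_pow_mul_indicator_le_sub_le σ γ₀ hY1 hY2 hC hk hS hScf
    hW hW1 hW2 hW3 hWS Λ
  obtain ⟨E, hE⟩ := hε1.bound
  refine IsBigO.of_bound (|M| * (σ ^ 4 + (1 + |γ₀| * |E| ^ (Y - 1)))) ?_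
  filter_upwards [hεpos, hΛ, hE, self_mem_nhdsWithin] with h hε ⟨hτ, hρ⟩ hE hh
  have hεE : ε h ≤ |E| := by
    rw [norm_one, mul_one, Real.norm_of_nonneg hε.le] at hE
    exact hE.trans (le_abs_self E)
  have hh : 0 < h := hh
  rw [Real.norm_eq_abs, Real.norm_of_nonneg (add_nonneg (norm_nonneg _) (norm_nonneg _)),
    Real.norm_of_nonneg (by positivity), Real.norm_of_nonneg (by positivity)]
  refine (hM h (ε h) hh hε hτ hρ).trans ?_
  rw [mul_assoc |M|, mul_add (_ + _)]
  gcongr ?_ * (?_ * _ + ?_ * _)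
  · exact le_abs_self M
  · exact le_add_of_nonneg_right (by positivity)
  · refine le_add_of_nonneg_of_le (by positivity) ?_
    gcongr

end Asymptotics

/-! ### Gaussian moments -/

section GaussianMoments

variable {Ω : Type*} [MeasurableSpace Ω] {P : Measure Ω} {W : Ω → ℝ}

theorem memLp_natCast_of_map_eq_gaussianReal {μ : ℝ} {v : ℝ≥0} (hW : AEMeasurable W P)
    (hlaw : P.map W = gaussianReal μ v) (n : ℕ) : MemLp W n P := by
  refine (memLp_map_measure_iff (g := id) aestronglyMeasurable_id hW).1 ?_
  rw [hlaw]
  exact_mod_cast memLp_id_gaussianReal (n : ℝ≥0)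

theorem integral_sq_gaussianReal_zero (v : ℝ≥0) : ∫ x, x ^ 2 ∂gaussianReal 0 v = v := by
  rw [← variance_id_gaussianReal (μ := 0), variance_of_integral_eq_zero aemeasurable_id
    integral_id_gaussianReal]
  rfl

theorem integral_gaussianReal_zero_eq_zero_of_odd {f : ℝ → ℝ} (hf : ∀ x, f (-x) = -f x)
    (v : ℝ≥0) : ∫ x, f x ∂gaussianReal 0 v = 0 := by
  have hmap : ∫ x, f (-x) ∂gaussianReal 0 v = ∫ x, f x ∂gaussianReal 0 v := by
    conv_rhs => rw [← neg_zero, ← gaussianReal_map_neg]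
    exact ((MeasurableEquiv.neg ℝ).measurableEmbedding.integral_map f).symm
  simp only [hf, integral_neg] at hmap
  linarith

end GaussianMoments

theorem isBigO_of_tendsto_div_atTop {α : Type*} {l : Filter α} {f g : α → ℝ}
    (h : Tendsto (fun x => f x / g x) l atTop) : g =O[l] f := by
  refine IsBigO.of_bound 1 ?_
  filter_upwards [h.eventually_ge_atTop 1] with x hx
  rcases eq_or_ne (g x) 0 with hg | hg
  · rw [hg, norm_zero]
    positivity
  · have hratio : 1 ≤ ‖f x‖ / ‖g x‖ := by
      rw [← norm_div]
      exact hx.trans (le_abs_self _)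
    rwa [one_le_div (norm_pos_iff.2 hg), ← one_mul ‖f x‖] at hratio

theorem truncated_stable_even_moments_general
    {Ω : Type*} [MeasurableSpace Ω] (P : Measure Ω) [IsProbabilityMeasure P]
    (Y Cp Cm σ : ℝ) (hY1 : 1 < Y) (hY2 : Y < 2) (hC : 0 < Cp + Cm)
    (S : Ω → ℝ) (hS : AEMeasurable S P)
    (hScf : ∀ u : ℝ, ∫ ω, Complex.exp (Complex.I * u * S ω) ∂P = stableCF Y Cp Cm u)
    (γ₀ : ℝ) (k : ℕ) (hk : 1 ≤ k)
    (W : Ω → ℝ) (hW : MemLp W (2 * k + 4 : ℕ) P) (hW1 : ∫ ω, W ω ∂P = 0)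
    (hW2 : ∫ ω, W ω ^ 2 ∂P = 1) (hW3 : ∫ ω, W ω ^ 3 ∂P = 0) (hWS : IndepFun W S P)
    (ε : ℝ → ℝ) (hεpos : ∀ᶠ h in 𝓝[>] 0, 0 < ε h) (hε1 : ε =O[𝓝[>] 0] fun _ => (1 : ℝ))
    (hεsqrt : Real.sqrt =O[𝓝[>] 0] ε) :
    ∃ R₁ R₂ : ℝ → ℝ,
      (∀ h, ∫ ω, (h ^ (1 / Y) * S ω) ^ (2 * k) * {x : ℝ | |x| ≤ ε h}.indicator (fun _ => 1)
            (σ * (√h * W ω) + h ^ (1 / Y) * S ω + h * γ₀) ∂P =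
          (Cp + Cm) / (2 * k - Y) * h * ε h ^ (2 * (k : ℝ) - Y) +
            σ ^ 2 * (Cp + Cm) * (2 * k - 1 - Y) / 2 * h ^ 2 * ε h ^ (2 * (k : ℝ) - Y - 2) +
            R₁ h + R₂ h) ∧
      R₁ =O[𝓝[>] 0] (fun h => h ^ 3 * ε h ^ (2 * (k : ℝ) - 4 - Y)) ∧
      R₂ =O[𝓝[>] 0] (fun h => h ^ 2 * ε h ^ (2 * (k : ℝ) - 2 * Y)) := by
  obtain ⟨R₁, R₂, hadd, hR₁, hR₂⟩ := exists_add_eq_isBigO_of_isBigO_add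
    (isBigO_integral_pow_mul_indicator_sub σ γ₀ hY1 hY2 hC hk hS hScf hW hW1 hW2 hW3 hWS
      hεpos hε1 hεsqrt)
  refine ⟨R₁, R₂, fun h => ?_, hR₁, hR₂⟩
  rw [add_assoc _ (R₁ h), ← sub_eq_iff_eq_add']
  exact congrFun hadd h

/-- Lemma C.4: expansion of the truncated even moments of the stable part:
`E(S_h^{2k} 1_{|σW_h + S_h + hγ₀| ≤ ε})`. -/
theorem truncated_stable_even_moments
    {Ω : Type*} [MeasurableSpace Ω] (P : Measure Ω) [IsProbabilityMeasure P]
    (Y Cp Cm σ : ℝ)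
    (hY1 : 1 < Y) (hY2 : Y < 2) (hCp : 0 < Cp) (hCm : 0 < Cm) (hσ : 0 < σ)
    (S : Ω → ℝ) (hSmeas : Measurable S)
    (hScf : ∀ u : ℝ, ∫ ω, Complex.exp (Complex.I * u * S ω) ∂P = stableCF Y Cp Cm u)
    (W : Ω → ℝ) (hWmeas : Measurable W) (hW : P.map W = gaussianReal 0 1)
    (hindep : IndepFun W S P)
    (γ₀ : ℝ) (k : ℕ) (hk : 1 ≤ k)
    -- the threshold `ε = ε(h)`
    (ε : ℝ → ℝ) (hεpos : ∀ h : ℝ, 0 < h → 0 < ε h)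
    (hε0 : Tendsto ε (𝓝[>] (0 : ℝ)) (𝓝 0))
    (hεsqrt : Tendsto (fun h => ε h / Real.sqrt h) (𝓝[>] (0 : ℝ)) atTop) :
    ∃ R₁ R₂ R₃ : ℝ → ℝ,
      (∀ h : ℝ, 0 < h →
        (∫ ω, (h ^ (1 / Y) * S ω) ^ (2 * k) *
            Set.indicator {x : ℝ | |x| ≤ ε h} (fun _ => (1 : ℝ))
              (σ * (Real.sqrt h * W ω) + h ^ (1 / Y) * S ω + h * γ₀) ∂P)
          = (Cp + Cm) / (2 * k - Y) * h * ε h ^ (2 * (k : ℝ) - Y)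
            + σ ^ 2 * (Cp + Cm) * (2 * k - 1 - Y) / 2 * h ^ 2 * ε h ^ (2 * (k : ℝ) - Y - 2)
            + R₁ h + R₂ h + R₃ h) ∧
      R₁ =O[𝓝[>] (0 : ℝ)] (fun h => h ^ 3 * ε h ^ (2 * (k : ℝ) - 4 - Y)) ∧
      R₂ =O[𝓝[>] (0 : ℝ)] (fun h => h ^ 2 * ε h ^ (2 * (k : ℝ) - 2 * Y)) ∧
      R₃ =O[𝓝[>] (0 : ℝ)]
        (fun h => ε h ^ (2 * (k : ℝ) - 1 - Y) * h ^ ((3 : ℝ) / 2) *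
          Real.exp (-(ε h ^ 2) / (2 * σ ^ 2 * h))) := by
  have hW' := hWmeas.aemeasurable (μ := P)
  have hmoment : ∀ f : ℝ → ℝ, Continuous f → ∫ ω, f (W ω) ∂P = ∫ x, f x ∂gaussianReal 0 1 :=
    fun f hf => by rw [← hW, integral_map hW' hf.aestronglyMeasurable]
  obtain ⟨R₁, R₂, hsum, hR₁, hR₂⟩ := truncated_stable_even_moments_general P Y Cp Cm σ hY1 hY2
    (add_pos hCp hCm) S hSmeas.aemeasurable hScf γ₀ k hk W
    (memLp_natCast_of_map_eq_gaussianReal hW' hW _)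
    ((hmoment _ continuous_id).trans integral_id_gaussianReal)
    ((hmoment _ (continuous_pow 2)).trans (integral_sq_gaussianReal_zero 1))
    ((hmoment _ (continuous_pow 3)).trans
      (integral_gaussianReal_zero_eq_zero_of_odd (fun x => Odd.neg_pow ⟨1, rfl⟩ x) 1))
    hindep ε (eventually_mem_nhdsWithin.mono hεpos) (hε0.isBigO_one ℝ)
    (isBigO_of_tendsto_div_atTop hεsqrt)
  refine ⟨R₁, R₂, 0, fun h _ => ?_, hR₁, hR₂, isBigO_zero _ _⟩
  rw [Pi.zero_apply, add_zero, hsum]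

end
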